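/- arXiv:1903.07192 — 4 statements merged into one kernel-verified Lean document; each statement's English description precedes it below -/
import Mathlib

section
/- Fix ρ ∈ (0,1) and ν ∈ ℝ. Then (1+ρρ₀)² − ρ²ρ₀²sin²ν ≥ 0 and (1−ρρ₀)² − ρ²ρ₀²sin²ν ≥ 0, so that h* = (1/2){√((1+ρρ₀)² − ρ²ρ₀²sin²ν) − √((1−ρρ₀)² − ρ²ρ₀²sin²ν)} is a well-defined real number, and moreover 0 < h* < 1. -/
/-
Put `k = ρρ₀` and `c = k² sin² ν`, so that `h*` is half the gap between `√((1 + k)² - c)` and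
`√((1 - k)² - c)`. Since `ρ² + ρ₀² = 1`, we have `|k| ≤ 1/2`, which gives `c ≤ k² ≤ (1 ± k)²`. The
radicands differ by `4k > 0`, so the gap is positive, and by subadditivity of the square root it is
at most `2√k`; hence `h* ≤ √k ≤ √(1/2) < 1`.
-/

open Real

noncomputable section

/-- `ρ₀ = √(1-ρ²)`. -/
def rz (ρ : ℝ) : ℝ := Real.sqrt (1 - ρ ^ 2)

/-- `h* = (1/2){√((1+ρρ₀)² − ρ²ρ₀²sin²ν) − √((1−ρρ₀)² − ρ²ρ₀²sin²ν)}`. -/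
def hstar (ρ ν : ℝ) : ℝ :=
  (1 / 2) * (Real.sqrt ((1 + ρ * rz ρ) ^ 2 - ρ ^ 2 * (rz ρ) ^ 2 * (Real.sin ν) ^ 2)
    - Real.sqrt ((1 - ρ * rz ρ) ^ 2 - ρ ^ 2 * (rz ρ) ^ 2 * (Real.sin ν) ^ 2))

section SqrtGap

variable {x y k s c : ℝ}

theorem sqrt_add_le_sqrt_add_sqrt (hx : 0 ≤ x) (hy : 0 ≤ y) : √(x + y) ≤ √x + √y := by
  refine Real.sqrt_le_iff.mpr ⟨by positivity, ?_⟩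
  calc x + y = √x ^ 2 + √y ^ 2 := by rw [Real.sq_sqrt hx, Real.sq_sqrt hy]
    _ ≤ (√x + √y) ^ 2 := pow_add_pow_le (Real.sqrt_nonneg x) (Real.sqrt_nonneg y) two_ne_zero

theorem sq_mul_le_one_sub_sq (hk : k ≤ 1 / 2) (hs : s ≤ 1) : k ^ 2 * s ≤ (1 - k) ^ 2 :=
  calc k ^ 2 * s ≤ k ^ 2 := mul_le_of_le_one_right (sq_nonneg k) hs
    _ ≤ k ^ 2 + (1 - 2 * k) := by linarith
    _ = (1 - k) ^ 2 := by ring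

theorem one_add_sq_sub_eq (k c : ℝ) : (1 + k) ^ 2 - c = ((1 - k) ^ 2 - c) + 4 * k := by
  ring

theorem sqrt_one_sub_sq_sub_lt (hk : 0 < k) (hc : c ≤ (1 - k) ^ 2) :
    √((1 - k) ^ 2 - c) < √((1 + k) ^ 2 - c) := by
  refine Real.sqrt_lt_sqrt (sub_nonneg.mpr hc) ?_
  rw [one_add_sq_sub_eq]
  linarith

theorem sqrt_one_add_sq_sub_le (hk : 0 ≤ k) (hc : c ≤ (1 - k) ^ 2) :
    √((1 + k) ^ 2 - c) ≤ √((1 - k) ^ 2 - c) + 2 * √k := by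
  have sqrt_four_mul : √(4 * k) = 2 * √k := by
    rw [show (4 : ℝ) = 2 ^ 2 by norm_num, Real.sqrt_mul (sq_nonneg 2), Real.sqrt_sq zero_le_two]
  rw [one_add_sq_sub_eq, ← sqrt_four_mul]
  exact sqrt_add_le_sqrt_add_sqrt (sub_nonneg.mpr hc) (by positivity)

end SqrtGap

section HStar

variable {ρ : ℝ}

theorem rz_nonneg (ρ : ℝ) : 0 ≤ rz ρ :=
  Real.sqrt_nonneg _

theorem rz_pos (hρ : ρ ^ 2 < 1) : 0 < rz ρ :=
  Real.sqrt_pos.mpr (sub_pos.mpr hρ)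

theorem sq_add_rz_sq (hρ : ρ ^ 2 ≤ 1) : ρ ^ 2 + rz ρ ^ 2 = 1 := by
  rw [rz, Real.sq_sqrt (sub_nonneg.mpr hρ), add_sub_cancel]

theorem abs_mul_rz_le_half (hρ : ρ ^ 2 ≤ 1) : |ρ * rz ρ| ≤ 1 / 2 := by
  have two_mul_le : 2 * |ρ| * |rz ρ| ≤ |ρ| ^ 2 + |rz ρ| ^ 2 := two_mul_le_add_sq _ _
  rw [sq_abs, sq_abs, sq_add_rz_sq hρ] at two_mul_le
  rw [abs_mul]
  linarith

theorem sq_mul_rz_sq_mul_sin_sq_le_one_sub_sq (hρ : ρ ^ 2 ≤ 1) (ν : ℝ) :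
    ρ ^ 2 * rz ρ ^ 2 * sin ν ^ 2 ≤ (1 - ρ * rz ρ) ^ 2 := by
  rw [← mul_pow]
  exact sq_mul_le_one_sub_sq (abs_le.mp (abs_mul_rz_le_half hρ)).2 (sin_sq_le_one ν)

theorem sq_mul_rz_sq_mul_sin_sq_le_one_add_sq (hρ : ρ ^ 2 ≤ 1) (ν : ℝ) :
    ρ ^ 2 * rz ρ ^ 2 * sin ν ^ 2 ≤ (1 + ρ * rz ρ) ^ 2 := by
  have h := sq_mul_rz_sq_mul_sin_sq_le_one_sub_sq (ρ := -ρ) (by rwa [neg_sq]) ν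
  simpa only [rz, neg_sq, neg_mul, sub_neg_eq_add] using h

theorem hstar_pos (hρ₀ : 0 < ρ) (hρ₁ : ρ < 1) (ν : ℝ) : 0 < hstar ρ ν := by
  have hρ : ρ ^ 2 < 1 := pow_lt_one₀ hρ₀.le hρ₁ two_ne_zero
  exact mul_pos one_half_pos <| sub_pos.mpr <| sqrt_one_sub_sq_sub_lt (mul_pos hρ₀ (rz_pos hρ))
    (sq_mul_rz_sq_mul_sin_sq_le_one_sub_sq hρ.le ν)

theorem hstar_le_sqrt_mul_rz (hρ₀ : 0 ≤ ρ) (hρ₁ : ρ ≤ 1) (ν : ℝ) :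
    hstar ρ ν ≤ √(ρ * rz ρ) := by
  have gap_le := sqrt_one_add_sq_sub_le (mul_nonneg hρ₀ (rz_nonneg ρ))
    (sq_mul_rz_sq_mul_sin_sq_le_one_sub_sq (pow_le_one₀ hρ₀ hρ₁) ν)
  rw [hstar]
  linarith

theorem hstar_lt_one (hρ₀ : 0 ≤ ρ) (hρ₁ : ρ ≤ 1) (ν : ℝ) : hstar ρ ν < 1 := by
  have mul_rz_le_half : ρ * rz ρ ≤ 1 / 2 :=
    (le_abs_self _).trans (abs_mul_rz_le_half (pow_le_one₀ hρ₀ hρ₁))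
  calc hstar ρ ν ≤ √(ρ * rz ρ) := hstar_le_sqrt_mul_rz hρ₀ hρ₁ ν
    _ ≤ √(1 / 2) := Real.sqrt_le_sqrt mul_rz_le_half
    _ < 1 := (Real.sqrt_lt' one_pos).mpr (by norm_num)

end HStar

/-- the two radicands defining `h*` are nonnegative, and `0 < h* < 1`. -/
theorem stmt9 (ρ ν : ℝ) (hρ : ρ ∈ Set.Ioo (0 : ℝ) 1) :
    0 ≤ (1 + ρ * rz ρ) ^ 2 - ρ ^ 2 * (rz ρ) ^ 2 * (Real.sin ν) ^ 2 ∧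
    0 ≤ (1 - ρ * rz ρ) ^ 2 - ρ ^ 2 * (rz ρ) ^ 2 * (Real.sin ν) ^ 2 ∧
    0 < hstar ρ ν ∧ hstar ρ ν < 1 := by
  obtain ⟨hρ₀, hρ₁⟩ := hρ
  have hρ_sq : ρ ^ 2 ≤ 1 := pow_le_one₀ hρ₀.le hρ₁.le
  exact ⟨sub_nonneg.mpr (sq_mul_rz_sq_mul_sin_sq_le_one_add_sq hρ_sq ν),
    sub_nonneg.mpr (sq_mul_rz_sq_mul_sin_sq_le_one_sub_sq hρ_sq ν),
    hstar_pos hρ₀ hρ₁ ν, hstar_lt_one hρ₀.le hρ₁.le ν⟩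

end
end

section
/- Fix ρ ∈ (0,1) and ν ∈ ℝ, and assume (ρ, ν) ≠ (1/√2, π/2 + nπ) for every integer n. Define h(k) = ρρ₀ cos k / √(1 − ρ²ρ₀²(sin k − sin ν)²). Then |h(k)| ≤ h* for every k ∈ ℝ, and there exists k* ∈ ℝ with h(k*) = h*; in other words, the range of h is exactly the interval [−h*, h*]. -/
open Real

noncomputable section

/-- `h(k) = ρρ₀ cos k / √(1 − ρ²ρ₀²(sin k − sin ν)²)`. -/
def hfun (ρ ν k : ℝ) : ℝ :=
  ρ * rz ρ * Real.cos k / Real.sqrt (1 - ρ ^ 2 * (rz ρ) ^ 2 * (Real.sin k - Real.sin ν) ^ 2)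

/-!
Put `a = ρρ₀` and `s = sin ν`. In terms of `x = sin k`, the bound `h(k)² ≤ H` says that the
quadratic polynomial `H (1 - a² (x - s)²) - a² (1 - x²)` is nonnegative. Its discriminant vanishes
exactly when `H² - (1 + a² - a² s²) H + a² = 0`, whose smaller root is `(h*)²`. For this `H` the
polynomial is a positive multiple of the square of `(1 - H) x + H s`, which gives the bound, with
equality at `sin k = -H s / (1 - H)`. The estimate `H ≤ a` together with `a (1 + |s|) < 1` puts this
point in `[-1, 1]`. The symmetry `k ↦ π - k` and the intermediate value theorem give the range.
-/

section SqrtSub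

variable {A B : ℝ}

theorem sq_sqrt_sub_sqrt_le_sub (hB : 0 ≤ B) (hBA : B ≤ A) : (√A - √B) ^ 2 ≤ A - B := by
  have hsqrt : √B ≤ √A := Real.sqrt_le_sqrt hBA
  calc (√A - √B) ^ 2 = (√A - √B) * (√A - √B) := sq _
    _ ≤ (√A - √B) * (√A + √B) :=
        mul_le_mul_of_nonneg_left (by linarith [Real.sqrt_nonneg B]) (sub_nonneg.mpr hsqrt)
    _ = √A ^ 2 - √B ^ 2 := by ring
    _ = A - B := by rw [Real.sq_sqrt (hB.trans hBA), Real.sq_sqrt hB]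

-- The other root is `((√A + √B) / 2) ^ 2`: sum `(A + B) / 2`, product `((A - B) / 4) ^ 2`.
theorem sq_half_sqrt_sub_sqrt_isRoot (hA : 0 ≤ A) (hB : 0 ≤ B) :
    (((√A - √B) / 2) ^ 2) ^ 2 - (A + B) / 2 * ((√A - √B) / 2) ^ 2 + ((A - B) / 4) ^ 2 = 0 := by
  have hA' := Real.sq_sqrt hA
  have hB' := Real.sq_sqrt hB
  generalize √A = p at hA' ⊢
  generalize √B = q at hB' ⊢
  subst hA' hB'
  ring

end SqrtSub

/-- The function `h` of the theorem in terms of the amplitude `a = ρρ₀` and the shift `s = sin ν`,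
which are here independent real parameters. -/
def hProfile (a s k : ℝ) : ℝ :=
  a * cos k / √(1 - a ^ 2 * (sin k - s) ^ 2)

/-- The maximal value `h*` of `hProfile a s`, as a function of the amplitude and the shift. -/
def hPeak (a s : ℝ) : ℝ :=
  (√((1 + a) ^ 2 - a ^ 2 * s ^ 2) - √((1 - a) ^ 2 - a ^ 2 * s ^ 2)) / 2

theorem hProfile_pi_sub (a s k : ℝ) : hProfile a s (π - k) = -hProfile a s k := by
  simp only [hProfile, sin_pi_sub, cos_pi_sub, mul_neg, neg_div]

theorem hPeak_nonneg {a : ℝ} (ha : 0 ≤ a) (s : ℝ) : 0 ≤ hPeak a s := by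
  have hle : √((1 - a) ^ 2 - a ^ 2 * s ^ 2) ≤ √((1 + a) ^ 2 - a ^ 2 * s ^ 2) :=
    Real.sqrt_le_sqrt (by linarith)
  exact div_nonneg (sub_nonneg.mpr hle) zero_le_two

theorem mul_sub_eq_sq_of_isRoot {a s H : ℝ}
    (hH : H ^ 2 - (1 + a ^ 2 - a ^ 2 * s ^ 2) * H + a ^ 2 = 0) (x : ℝ) :
    (1 - H) * (H * (1 - a ^ 2 * (x - s) ^ 2) - a ^ 2 * (1 - x ^ 2)) =
      (a * ((1 - H) * x + H * s)) ^ 2 := by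
  linear_combination -hH

theorem exists_abs_le_one_one_sub_mul_add_eq_zero {H s : ℝ} (hH : 0 ≤ H)
    (hHs : H * (1 + |s|) < 1) : ∃ x : ℝ, |x| ≤ 1 ∧ (1 - H) * x + H * s = 0 := by
  have hH1 : 0 < 1 - H := by nlinarith [abs_nonneg s]
  refine ⟨-(H * s) / (1 - H), ?_, by rw [mul_div_cancel₀ _ hH1.ne']; ring⟩
  rw [abs_div, abs_neg, abs_mul, abs_of_nonneg hH, abs_of_pos hH1, div_le_one hH1]
  linarith

section Admissible

variable {a s : ℝ}

theorem one_sub_sq_mul_sq_pos {x : ℝ} (ha : 0 ≤ a) (has : a * (1 + |s|) < 1) (hx : |x| ≤ 1) :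
    0 < 1 - a ^ 2 * (x - s) ^ 2 := by
  have hdist : |x - s| ≤ 1 + |s| := (abs_sub x s).trans (by gcongr)
  have hlt : |a * (x - s)| < 1 := by
    rw [abs_mul, abs_of_nonneg ha]
    exact (mul_le_mul_of_nonneg_left hdist ha).trans_lt has
  rw [← mul_pow]
  exact sub_pos.mpr ((sq_lt_one_iff_abs_lt_one _).mpr hlt)

theorem sq_mul_sq_le_one_sub_sq (ha : 0 ≤ a) (has : a * (1 + |s|) < 1) :
    a ^ 2 * s ^ 2 ≤ (1 - a) ^ 2 := by
  rw [← mul_pow, ← sq_abs (a * s), abs_mul, abs_of_nonneg ha]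
  exact pow_le_pow_left₀ (by positivity) (by linarith) 2

theorem hPeak_sq_le (ha : 0 ≤ a) (has : a * (1 + |s|) < 1) : hPeak a s ^ 2 ≤ a := by
  have hdiff := sq_sqrt_sub_sqrt_le_sub (A := (1 + a) ^ 2 - a ^ 2 * s ^ 2)
    (sub_nonneg.mpr (sq_mul_sq_le_one_sub_sq ha has)) (by linarith)
  rw [hPeak, div_pow]
  linarith

theorem hPeak_sq_isRoot (ha : 0 ≤ a) (has : a * (1 + |s|) < 1) :
    (hPeak a s ^ 2) ^ 2 - (1 + a ^ 2 - a ^ 2 * s ^ 2) * hPeak a s ^ 2 + a ^ 2 = 0 := by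
  have hB : 0 ≤ (1 - a) ^ 2 - a ^ 2 * s ^ 2 := sub_nonneg.mpr (sq_mul_sq_le_one_sub_sq ha has)
  have hA : 0 ≤ (1 + a) ^ 2 - a ^ 2 * s ^ 2 := by linarith
  have hroot := sq_half_sqrt_sub_sqrt_isRoot hA hB
  rw [← hPeak] at hroot
  linear_combination hroot

theorem hPeak_sq_mul_one_add_abs_lt_one (ha : 0 ≤ a) (has : a * (1 + |s|) < 1) :
    hPeak a s ^ 2 * (1 + |s|) < 1 :=
  (mul_le_mul_of_nonneg_right (hPeak_sq_le ha has) (by positivity)).trans_lt has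

theorem hPeak_sq_lt_one (ha : 0 ≤ a) (has : a * (1 + |s|) < 1) : hPeak a s ^ 2 < 1 :=
  (le_mul_of_one_le_right (sq_nonneg _) (by linarith [abs_nonneg s])).trans_lt
    (hPeak_sq_mul_one_add_abs_lt_one ha has)

theorem continuous_hProfile (ha : 0 ≤ a) (has : a * (1 + |s|) < 1) :
    Continuous (hProfile a s) :=
  Continuous.div (by fun_prop) (by fun_prop) fun k ↦
    (Real.sqrt_pos.mpr (one_sub_sq_mul_sq_pos ha has (abs_sin_le_one k))).ne'

theorem abs_hProfile_le_hPeak (ha : 0 ≤ a) (has : a * (1 + |s|) < 1) (k : ℝ) :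
    |hProfile a s k| ≤ hPeak a s := by
  have hD := one_sub_sq_mul_sq_pos ha has (abs_sin_le_one k)
  have hquad : 0 ≤ hPeak a s ^ 2 * (1 - a ^ 2 * (sin k - s) ^ 2) - a ^ 2 * (1 - sin k ^ 2) := by
    refine nonneg_of_mul_nonneg_right ?_ (sub_pos.mpr (hPeak_sq_lt_one ha has))
    rw [mul_sub_eq_sq_of_isRoot (hPeak_sq_isRoot ha has)]
    positivity
  refine abs_le_of_sq_le_sq ?_ (hPeak_nonneg ha s)
  rw [hProfile, div_pow, Real.sq_sqrt hD.le, div_le_iff₀ hD, mul_pow, cos_sq']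
  linarith

theorem exists_hProfile_eq_hPeak (ha : 0 ≤ a) (has : a * (1 + |s|) < 1) :
    ∃ k : ℝ, hProfile a s k = hPeak a s := by
  obtain ⟨x, hx, hcrit⟩ := exists_abs_le_one_one_sub_mul_add_eq_zero (sq_nonneg _)
    (hPeak_sq_mul_one_add_abs_lt_one ha has)
  have hD := one_sub_sq_mul_sq_pos ha has hx
  have hquad : hPeak a s ^ 2 * (1 - a ^ 2 * (x - s) ^ 2) - a ^ 2 * (1 - x ^ 2) = 0 := by
    have hsq := mul_sub_eq_sq_of_isRoot (hPeak_sq_isRoot ha has) x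
    rw [hcrit, mul_zero, zero_pow two_ne_zero] at hsq
    exact (mul_eq_zero.mp hsq).resolve_left (sub_pos.mpr (hPeak_sq_lt_one ha has)).ne'
  refine ⟨arcsin x, ?_⟩
  rw [hProfile, sin_arcsin (abs_le.mp hx).1 (abs_le.mp hx).2, cos_arcsin,
    ← sq_eq_sq₀ (by positivity) (hPeak_nonneg ha s), div_pow, Real.sq_sqrt hD.le,
    div_eq_iff hD.ne', mul_pow, Real.sq_sqrt (sub_nonneg.mpr ((sq_le_one_iff_abs_le_one x).mpr hx))]
  linarith

theorem range_hProfile (ha : 0 ≤ a) (has : a * (1 + |s|) < 1) :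
    Set.range (hProfile a s) = Set.Icc (-hPeak a s) (hPeak a s) := by
  refine Set.Subset.antisymm ?_ ?_
  · rintro _ ⟨k, rfl⟩
    exact abs_le.mp (abs_hProfile_le_hPeak ha has k)
  · obtain ⟨k, hk⟩ := exists_hProfile_eq_hPeak ha has
    have hivt := intermediate_value_univ (π - k) k (continuous_hProfile ha has)
    rwa [hProfile_pi_sub, hk] at hivt

end Admissible

theorem stmt10_general {a s : ℝ} (ha : 0 ≤ a) (has : a * (1 + |s|) < 1) :
    (∀ k : ℝ, |hProfile a s k| ≤ hPeak a s) ∧ (∃ kstar : ℝ, hProfile a s kstar = hPeak a s) ∧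
      Set.range (hProfile a s) = Set.Icc (-hPeak a s) (hPeak a s) :=
  ⟨abs_hProfile_le_hPeak ha has, exists_hProfile_eq_hPeak ha has, range_hProfile ha has⟩

theorem hfun_eq_hProfile (ρ ν : ℝ) : hfun ρ ν = hProfile (ρ * rz ρ) (sin ν) := by
  funext k
  rw [hfun, hProfile, mul_pow]

theorem hstar_eq_hPeak (ρ ν : ℝ) : hstar ρ ν = hPeak (ρ * rz ρ) (sin ν) := by
  rw [hstar, hPeak, mul_pow, one_div_mul_eq_div]

theorem sq_add_sq_rz {ρ : ℝ} (hρ : ρ ^ 2 ≤ 1) : ρ ^ 2 + rz ρ ^ 2 = 1 := by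
  rw [rz, Real.sq_sqrt (sub_nonneg.mpr hρ), add_sub_cancel]

theorem mul_rz_le_half {ρ : ℝ} (hρ : ρ ^ 2 ≤ 1) : ρ * rz ρ ≤ 1 / 2 := by
  linarith [two_mul_le_add_sq ρ (rz ρ), sq_add_sq_rz hρ]

theorem eq_one_div_sqrt_two_of_mul_rz_eq_half {ρ : ℝ} (hρ : ρ ^ 2 ≤ 1)
    (h : ρ * rz ρ = 1 / 2) : ρ = 1 / √2 := by
  have hsum := sq_add_sq_rz hρ
  have heq : ρ = rz ρ := by
    have hsq : (ρ - rz ρ) ^ 2 = 0 := by linarith [sub_sq ρ (rz ρ)]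
    exact sub_eq_zero.mp (sq_eq_zero_iff.mp hsq)
  have hρ_nonneg : 0 ≤ ρ := (Real.sqrt_nonneg _).trans_eq heq.symm
  have hρ2 : ρ ^ 2 = 1 / 2 := by
    rw [← heq] at hsum
    linarith
  rw [← Real.sqrt_sq hρ_nonneg, hρ2, Real.sqrt_div zero_le_one, Real.sqrt_one]

theorem mul_rz_mul_one_add_abs_sin_lt_one {ρ ν : ℝ} (hρ : ρ ∈ Set.Ioo (0 : ℝ) 1)
    (hexc : ∀ n : ℤ, ¬(ρ = 1 / √2 ∧ ν = π / 2 + n * π)) :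
    ρ * rz ρ * (1 + |sin ν|) < 1 := by
  have hρsq : ρ ^ 2 ≤ 1 := pow_le_one₀ hρ.1.le hρ.2.le
  have hhalf := mul_rz_le_half hρsq
  have hsin := abs_sin_le_one ν
  by_contra! hge
  have hmul_eq : ρ * rz ρ = 1 / 2 := by nlinarith [abs_nonneg (sin ν)]
  have hsin_eq : |sin ν| = 1 := by
    rw [hmul_eq] at hge
    linarith
  obtain ⟨n, hn⟩ := abs_sin_eq_one_iff.mp hsin_eq
  exact hexc n ⟨eq_one_div_sqrt_two_of_mul_rz_eq_half hρsq hmul_eq, hn.symm⟩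

/-- `|h(k)| ≤ h*` for all `k`, the value `h*` is attained, and the range
of `h` is exactly `[−h*, h*]`. -/
theorem stmt10 (ρ ν : ℝ) (hρ : ρ ∈ Set.Ioo (0 : ℝ) 1)
    (hexc : ∀ n : ℤ, ¬(ρ = 1 / Real.sqrt 2 ∧ ν = π / 2 + n * π)) :
    (∀ k : ℝ, |hfun ρ ν k| ≤ hstar ρ ν) ∧ (∃ kstar : ℝ, hfun ρ ν kstar = hstar ρ ν) ∧
      Set.range (hfun ρ ν) = Set.Icc (-(hstar ρ ν)) (hstar ρ ν) := by
  rw [hfun_eq_hProfile, hstar_eq_hPeak]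
  exact stmt10_general (mul_nonneg hρ.1.le (Real.sqrt_nonneg _))
    (mul_rz_mul_one_add_abs_sin_lt_one hρ hexc)

end
end

section
/- Fix ρ ∈ (0,1), ν ∈ ℝ, and assume (ρ, ν) ≠ (1/√2, π/2 + nπ) for every integer n. Then for every natural number r, the rescaled moments of the quantum walk converge: lim_{t→∞} Σ_{x ∈ ℤ} (x/t)^r · P(X_t = x) = ∫_{−h*}^{h*} x^r (√(η₊(x)) + √(η₋(x))) · γ(x) / (2π(1−x²)√(ξ(x))) dx. -/
open Real Filter Topology MeasureTheory

noncomputable section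

/-- `α₀ = ρ e^{iν}`. -/
def az (ρ ν : ℝ) : ℂ := (ρ : ℂ) * Complex.exp (Complex.I * (ν : ℂ))

/-- `B₋`. -/
def Bm (ρ ν : ℝ) : Matrix (Fin 2) (Fin 2) ℂ :=
  !![0, 0; ((rz ρ) ^ 2 : ℝ), ((rz ρ : ℝ) : ℂ) * (starRingEnd ℂ) (az ρ ν)]

/-- `B₀`. -/
def B0 (ρ ν : ℝ) : Matrix (Fin 2) (Fin 2) ℂ :=
  !![-(az ρ ν) * ((rz ρ : ℝ) : ℂ), -((ρ ^ 2 : ℝ) : ℂ);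
      -((ρ ^ 2 : ℝ) : ℂ), ((rz ρ : ℝ) : ℂ) * (starRingEnd ℂ) (az ρ ν)]

/-- `B₊`. -/
def Bp (ρ ν : ℝ) : Matrix (Fin 2) (Fin 2) ℂ :=
  !![-(az ρ ν) * ((rz ρ : ℝ) : ℂ), (((rz ρ) ^ 2 : ℝ) : ℂ); 0, 0]

/-- The quantum walk `Ψ_t : ℤ → ℂ²`. -/
def qwalk (ρ ν : ℝ) (α β : ℂ) : ℕ → ℤ → Fin 2 → ℂ
  | 0, x => if x = 0 then ![α, β] else 0
  | t + 1, x =>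
      (Bm ρ ν).mulVec (qwalk ρ ν α β t (x + 1)) + (B0 ρ ν).mulVec (qwalk ρ ν α β t x)
        + (Bp ρ ν).mulVec (qwalk ρ ν α β t (x - 1))

/-- `P(X_t = x) = ‖Ψ_t(x)‖²`. -/
def qprob (ρ ν : ℝ) (α β : ℂ) (t : ℕ) (x : ℤ) : ℝ :=
  ‖qwalk ρ ν α β t x 0‖ ^ 2 + ‖qwalk ρ ν α β t x 1‖ ^ 2

/-- `ξ(x) = (ρ²−x²)(ρ₀²−x²) − ρ²ρ₀²(cos²ν)x²`. -/
def xif (ρ ν x : ℝ) : ℝ :=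
  (ρ ^ 2 - x ^ 2) * ((rz ρ) ^ 2 - x ^ 2) - ρ ^ 2 * (rz ρ) ^ 2 * (Real.cos ν) ^ 2 * x ^ 2

/-- `η₊(x)`. -/
def etaP (ρ ν x : ℝ) : ℝ :=
  1 - ρ ^ 2 * (rz ρ) ^ 2 * (1 + (Real.sin ν) ^ 2)
    - (1 - ρ ^ 2 * (rz ρ) ^ 2 * (Real.cos ν) ^ 2) * x ^ 2
    + 2 * ρ * rz ρ * Real.sin ν * Real.sqrt (xif ρ ν x)

/-- `η₋(x)`. -/
def etaM (ρ ν x : ℝ) : ℝ :=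
  1 - ρ ^ 2 * (rz ρ) ^ 2 * (1 + (Real.sin ν) ^ 2)
    - (1 - ρ ^ 2 * (rz ρ) ^ 2 * (Real.cos ν) ^ 2) * x ^ 2
    - 2 * ρ * rz ρ * Real.sin ν * Real.sqrt (xif ρ ν x)

/-- `γ(x)`. -/
def gam (ρ ν : ℝ) (α β : ℂ) (x : ℝ) : ℝ :=
  1 + (‖α‖ ^ 2 - ‖β‖ ^ 2
    - (2 * rz ρ / ρ) * ((α * (starRingEnd ℂ) β).re * Real.cos ν
        - (α * (starRingEnd ℂ) β).im * Real.sin ν)) * x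

/-!
In momentum space one step of the walk multiplies by a `2 × 2` matrix `U(k) = i (c + i H)`, where
`c = ρ ρ₀ (sin (k - ν) - sin ν)` is real and `H` is Hermitian with `H² = 1 - c²`. Away from the
exceptional parameters `|c| < 1`, so the two eigenvalues `i e^{± i arccos c}` never meet, and the
Fourier transform of the walk is a sum of two waves `e^{i t θ(k)} p(k)` with smooth phases and
smooth, pointwise orthogonal amplitudes. The `r`-th moment is an integral of the `r`-th derivative
of this sum against the sum itself. Every derivative produces a factor `i t θ'` up to an error of
relative order `1/t`, so the rescaled moments tend to those of the group velocity `-θ'`. As a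
function of `u = k - ν`, one of the two group velocities vanishes at `± π/2` and has a single
critical point in between, with value `h*`; each velocity in `(0, h*)` is thus taken twice, and
`√η₊` and `√η₋` are the contributions of these two preimages to the density.
-/

namespace QuantumWalk

open scoped ContDiff ComplexConjugate InnerProductSpace

section Waves

variable {E : Type*} [NormedAddCommGroup E] [NormedSpace ℂ E] {θ : ℝ → ℝ} {p : ℝ → E}

/-- The oscillating wave `e^{i t θ(u)} p(u)` with phase `θ`, amplitude `p` and large parameter
`t`. -/
def wave (θ : ℝ → ℝ) (p : ℝ → E) (t : ℕ) (u : ℝ) : E :=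
  Complex.exp (Complex.I * (t * θ u : ℝ)) • p u

lemma norm_wave (θ : ℝ → ℝ) (p : ℝ → E) (t : ℕ) (u : ℝ) : ‖wave θ p t u‖ = ‖p u‖ := by
  rw [wave, norm_smul, Complex.norm_exp_I_mul_ofReal, one_mul]

lemma contDiff_wave (hθ : ContDiff ℝ ∞ θ) (hp : ContDiff ℝ ∞ p) (t : ℕ) :
    ContDiff ℝ ∞ (wave θ p t) := by
  have hphase : ContDiff ℝ ∞ fun u => ((t * θ u : ℝ) : ℂ) :=
    Complex.ofRealCLM.contDiff.comp (contDiff_const.mul hθ)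
  exact (contDiff_const.mul hphase).cexp.smul hp

lemma deriv_wave (hθ : Differentiable ℝ θ) (hp : Differentiable ℝ p) (t : ℕ) :
    deriv (wave θ p t) =
      (Complex.I * t) • wave θ (fun u => ((deriv θ u : ℝ) : ℂ) • p u) t + wave θ (deriv p) t := by
  funext u
  have hphase : HasDerivAt (fun u => ((t * θ u : ℝ) : ℂ)) ((t * deriv θ u : ℝ) : ℂ) u :=
    ((hθ u).hasDerivAt.const_mul (t : ℝ)).ofReal_comp
  have hwave := (hphase.const_mul Complex.I).cexp.smul (hp u).hasDerivAt
  refine hwave.deriv.trans ?_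
  simp only [wave, Pi.add_apply, Pi.smul_apply, smul_smul]
  rw [add_comm]
  congr 2
  push_cast
  ring

lemma iteratedDeriv_succ_wave (hθ : ContDiff ℝ ∞ θ) (hp : ContDiff ℝ ∞ p) (r t : ℕ) (u : ℝ) :
    iteratedDeriv (r + 1) (wave θ p t) u =
      (Complex.I * t) • iteratedDeriv r (wave θ (fun u => ((deriv θ u : ℝ) : ℂ) • p u) t) u
        + iteratedDeriv r (wave θ (deriv p) t) u := by
  have hfirst : ContDiff ℝ r (wave θ (fun u => ((deriv θ u : ℝ) : ℂ) • p u) t) :=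
    (contDiff_wave hθ ((Complex.ofRealCLM.contDiff.comp (contDiff_infty_iff_deriv.1 hθ).2).smul hp)
      t).of_le (by exact_mod_cast le_top)
  have hscaled : ContDiff ℝ r
      ((Complex.I * t) • wave θ (fun u => ((deriv θ u : ℝ) : ℂ) • p u) t) := hfirst.const_smul _
  have hsecond : ContDiff ℝ r (wave θ (deriv p) t) :=
    (contDiff_wave hθ (contDiff_infty_iff_deriv.1 hp).2 t).of_le (by exact_mod_cast le_top)
  rw [iteratedDeriv_succ', deriv_wave (hθ.differentiable (by simp)) (hp.differentiable (by simp)),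
    iteratedDeriv_add hscaled.contDiffAt hsecond.contDiffAt,
    iteratedDeriv_const_smul hfirst.contDiffAt]

/-- What is left of the `r`-th derivative of a wave after subtracting the leading term, in which
every derivative hits the phase. -/
def waveRemainder (θ : ℝ → ℝ) (p : ℝ → E) (r t : ℕ) (u : ℝ) : E :=
  iteratedDeriv r (wave θ p t) u - (Complex.I * t * deriv θ u) ^ r • wave θ p t u

lemma waveRemainder_succ (hθ : ContDiff ℝ ∞ θ) (hp : ContDiff ℝ ∞ p) (r t : ℕ) (u : ℝ) :
    waveRemainder θ p (r + 1) t u =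
      (Complex.I * t) • waveRemainder θ (fun u => ((deriv θ u : ℝ) : ℂ) • p u) r t u
        + waveRemainder θ (deriv p) r t u
        + (Complex.I * t * deriv θ u) ^ r • wave θ (deriv p) t u := by
  rw [waveRemainder, iteratedDeriv_succ_wave hθ hp]
  simp only [waveRemainder, wave, pow_succ]
  module

lemma norm_waveRemainder_succ_le (hθ : ContDiff ℝ ∞ θ) (hp : ContDiff ℝ ∞ p) (r t : ℕ) (u : ℝ) :
    ‖waveRemainder θ p (r + 1) t u‖ ≤
      t * ‖waveRemainder θ (fun u => ((deriv θ u : ℝ) : ℂ) • p u) r t u‖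
        + ‖waveRemainder θ (deriv p) r t u‖ + t ^ r * (|deriv θ u| ^ r * ‖deriv p u‖) := by
  rw [waveRemainder_succ hθ hp]
  refine norm_add₃_le.trans_eq ?_
  simp [norm_smul, norm_wave, mul_pow, mul_assoc]

lemma exists_waveRemainder_bound (hθ : ContDiff ℝ ∞ θ) (hp : ContDiff ℝ ∞ p) (r : ℕ) :
    ∃ K : ℝ → ℝ, Continuous K ∧
      ∀ t : ℕ, 1 ≤ t → ∀ u, t * ‖waveRemainder θ p r t u‖ ≤ t ^ r * K u := by
  induction r generalizing p with
  | zero => exact ⟨0, continuous_const, fun t _ u => by simp [waveRemainder]⟩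
  | succ r ih =>
    have hθ' : ContDiff ℝ ∞ (deriv θ) := (contDiff_infty_iff_deriv.1 hθ).2
    have hp' : ContDiff ℝ ∞ (deriv p) := (contDiff_infty_iff_deriv.1 hp).2
    obtain ⟨K₁, hK₁, bound₁⟩ := ih ((Complex.ofRealCLM.contDiff.comp hθ').smul hp)
    obtain ⟨K₂, hK₂, bound₂⟩ := ih hp'
    refine ⟨fun u => K₁ u + K₂ u + |deriv θ u| ^ r * ‖deriv p u‖,
      (hK₁.add hK₂).add ((hθ'.continuous.abs.pow r).mul hp'.continuous.norm), fun t ht u => ?_⟩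
    have ht' : (1 : ℝ) ≤ t := by exact_mod_cast ht
    set R₁ := waveRemainder θ (fun u => ((deriv θ u : ℝ) : ℂ) • p u) r t u
    set R₂ := waveRemainder θ (deriv p) r t u
    have bound₂' : t * ‖R₂‖ ≤ t * (t ^ r * K₂ u) :=
      (bound₂ t ht u).trans (le_mul_of_one_le_left
        ((mul_nonneg (by positivity) (norm_nonneg _)).trans (bound₂ t ht u)) ht')
    calc t * ‖waveRemainder θ p (r + 1) t u‖
        ≤ t * (t * ‖R₁‖ + ‖R₂‖ + t ^ r * (|deriv θ u| ^ r * ‖deriv p u‖)) := by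
          gcongr
          exact norm_waveRemainder_succ_le hθ hp r t u
      _ = t * (t * ‖R₁‖) + t * ‖R₂‖ + t * (t ^ r * (|deriv θ u| ^ r * ‖deriv p u‖)) := by ring
      _ ≤ t * (t ^ r * K₁ u) + t * (t ^ r * K₂ u)
            + t * (t ^ r * (|deriv θ u| ^ r * ‖deriv p u‖)) := by
          gcongr t * ?_ + ?_ + _
          exact bound₁ t ht u
      _ = t ^ (r + 1) * (K₁ u + K₂ u + |deriv θ u| ^ r * ‖deriv p u‖) := by ring

end Waves

lemma tendsto_intervalIntegral_of_mul_norm_sub_le {E : Type*} [NormedAddCommGroup E]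
    [NormedSpace ℝ E] {f : ℕ → ℝ → E} {g : ℝ → E} {K : ℝ → ℝ} {a b : ℝ}
    (hab : a ≤ b) (hf : ∀ t, Continuous (f t)) (hg : Continuous g) (hK : Continuous K)
    (bound : ∀ t : ℕ, 1 ≤ t → ∀ u, t * ‖f t u - g u‖ ≤ K u) :
    Tendsto (fun t => ∫ u in a..b, f t u) atTop (𝓝 (∫ u in a..b, g u)) := by
  refine tendsto_iff_norm_sub_tendsto_zero.2 (squeeze_zero' (.of_forall fun t => norm_nonneg _) ?_
    (tendsto_const_div_atTop_nhds_zero_nat (∫ u in a..b, K u)))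
  filter_upwards [eventually_ge_atTop 1] with t ht
  rw [← intervalIntegral.integral_sub ((hf t).intervalIntegrable a b) (hg.intervalIntegrable a b),
    ← intervalIntegral.integral_div]
  refine intervalIntegral.norm_integral_le_of_norm_le hab (.of_forall fun u _ => ?_)
    ((hK.div_const _).intervalIntegrable a b)
  rw [le_div_iff₀' (by exact_mod_cast ht)]
  exact bound t ht u

section WavePackets

variable {ι : Type*} [Fintype ι]

section NormedSpace

variable {E : Type*} [NormedAddCommGroup E] [NormedSpace ℂ E] {θ : ι → ℝ → ℝ} {p : ι → ℝ → E}

/-- A finite superposition of waves with phases `θ i` and amplitudes `p i`. -/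
def wavePacket (θ : ι → ℝ → ℝ) (p : ι → ℝ → E) (t : ℕ) (u : ℝ) : E :=
  ∑ i, wave (θ i) (p i) t u

lemma contDiff_wavePacket (hθ : ∀ i, ContDiff ℝ ∞ (θ i)) (hp : ∀ i, ContDiff ℝ ∞ (p i)) (t : ℕ) :
    ContDiff ℝ ∞ (wavePacket θ p t) :=
  ContDiff.sum fun i _ => contDiff_wave (hθ i) (hp i) t

lemma norm_wavePacket_le (θ : ι → ℝ → ℝ) (p : ι → ℝ → E) (t : ℕ) (u : ℝ) :
    ‖wavePacket θ p t u‖ ≤ ∑ i, ‖p i u‖ :=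
  (norm_sum_le _ _).trans_eq (Finset.sum_congr rfl fun i _ => norm_wave (θ i) (p i) t u)

end NormedSpace

variable {E : Type*} [NormedAddCommGroup E] [InnerProductSpace ℂ E] {θ : ι → ℝ → ℝ}
  {p : ι → ℝ → E}

lemma inner_wavePacket_wave (θ : ι → ℝ → ℝ) {u : ℝ} (hp : Pairwise fun i j => ⟪p i u, p j u⟫_ℂ = 0)
    (t : ℕ) (j : ι) :
    ⟪wavePacket θ p t u, wave (θ j) (p j) t u⟫_ℂ = (‖p j u‖ : ℂ) ^ 2 := by
  rw [wavePacket, sum_inner, Finset.sum_eq_single j]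
  · rw [inner_self_eq_norm_sq_to_K, norm_wave]
    rfl
  · intro i _ hij
    rw [wave, wave, inner_smul_left, inner_smul_right, hp hij, mul_zero, mul_zero]
  · simp

lemma exists_inner_iteratedDeriv_wavePacket_bound (hθ : ∀ i, ContDiff ℝ ∞ (θ i))
    (hp : ∀ i, ContDiff ℝ ∞ (p i)) (hpp : ∀ u, Pairwise fun i j => ⟪p i u, p j u⟫_ℂ = 0) (r : ℕ) :
    ∃ K : ℝ → ℝ, Continuous K ∧ ∀ t : ℕ, 1 ≤ t → ∀ u,
      t * ‖⟪wavePacket θ p t u, iteratedDeriv r (wavePacket θ p t) u⟫_ℂ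
          - ∑ i, (Complex.I * t * deriv (θ i) u) ^ r * (‖p i u‖ : ℂ) ^ 2‖ ≤ t ^ r * K u := by
  choose K hK bound using fun i => exists_waveRemainder_bound (hθ i) (hp i) r
  refine ⟨fun u => (∑ i, ‖p i u‖) * ∑ i, K i u,
    (continuous_finsetSum _ fun i _ => (hp i).continuous.norm).mul
      (continuous_finsetSum _ fun i _ => hK i), fun t ht u => ?_⟩
  set R : ι → E := fun i => waveRemainder (θ i) (p i) r t u
  have inner_remainder :
      ⟪wavePacket θ p t u, iteratedDeriv r (wavePacket θ p t) u⟫_ℂ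
          - ∑ i, (Complex.I * t * deriv (θ i) u) ^ r * (‖p i u‖ : ℂ) ^ 2
        = ⟪wavePacket θ p t u, ∑ i, R i⟫_ℂ := by
    simp_rw [R, waveRemainder, Finset.sum_sub_distrib, inner_sub_right, inner_sum, inner_smul_right,
      inner_wavePacket_wave θ (hpp u)]
    congr 1
    rw [← inner_sum]
    congr 1
    exact iteratedDeriv_fun_sum fun i _ =>
      (contDiff_wave (hθ i) (hp i) t).contDiffAt.of_le (by exact_mod_cast le_top)
  rw [inner_remainder]
  calc t * ‖⟪wavePacket θ p t u, ∑ i, R i⟫_ℂ‖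
      ≤ t * ((∑ i, ‖p i u‖) * ∑ i, ‖R i‖) := by
        gcongr
        exact (norm_inner_le_norm _ _).trans
          (mul_le_mul (norm_wavePacket_le θ p t u) (norm_sum_le _ _) (norm_nonneg _)
            (Finset.sum_nonneg fun i _ => norm_nonneg _))
    _ = (∑ i, ‖p i u‖) * ∑ i, t * ‖R i‖ := by rw [← Finset.mul_sum]; ring
    _ ≤ (∑ i, ‖p i u‖) * ∑ i, t ^ r * K i u := by
        refine mul_le_mul_of_nonneg_left ?_ (by positivity)
        exact Finset.sum_le_sum fun i _ => bound i t ht u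
    _ = t ^ r * ((∑ i, ‖p i u‖) * ∑ i, K i u) := by rw [← Finset.mul_sum]; ring

lemma tendsto_integral_inner_iteratedDeriv_wavePacket (hθ : ∀ i, ContDiff ℝ ∞ (θ i))
    (hp : ∀ i, ContDiff ℝ ∞ (p i)) (hpp : ∀ u, Pairwise fun i j => ⟪p i u, p j u⟫_ℂ = 0) (r : ℕ)
    {a b : ℝ} (hab : a ≤ b) :
    Tendsto (fun t : ℕ => ∫ u in a..b,
        ((t : ℂ) ^ r)⁻¹ * ⟪wavePacket θ p t u, iteratedDeriv r (wavePacket θ p t) u⟫_ℂ)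
      atTop (𝓝 (∫ u in a..b, ∑ i, (Complex.I * deriv (θ i) u) ^ r * (‖p i u‖ : ℂ) ^ 2)) := by
  obtain ⟨K, hK, bound⟩ := exists_inner_iteratedDeriv_wavePacket_bound hθ hp hpp r
  have hW (t : ℕ) := contDiff_wavePacket hθ hp t
  have hθ' (i : ι) : Continuous (deriv (θ i)) := (contDiff_infty_iff_deriv.1 (hθ i)).2.continuous
  have hp' (i : ι) := (hp i).continuous
  refine tendsto_intervalIntegral_of_mul_norm_sub_le hab
    (fun t => continuous_const.mul ((hW t).continuous.inner
      ((hW t).continuous_iteratedDeriv r (by exact_mod_cast le_top))))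
    (by fun_prop) hK fun t ht u => ?_
  have ht₀ : (t : ℂ) ≠ 0 := by exact_mod_cast (Nat.one_le_iff_ne_zero.1 ht)
  have rescale :
      ((t : ℂ) ^ r)⁻¹ * ⟪wavePacket θ p t u, iteratedDeriv r (wavePacket θ p t) u⟫_ℂ
          - ∑ i, (Complex.I * deriv (θ i) u) ^ r * (‖p i u‖ : ℂ) ^ 2
        = ((t : ℂ) ^ r)⁻¹ * (⟪wavePacket θ p t u, iteratedDeriv r (wavePacket θ p t) u⟫_ℂ
          - ∑ i, (Complex.I * t * deriv (θ i) u) ^ r * (‖p i u‖ : ℂ) ^ 2) := by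
    rw [mul_sub, Finset.mul_sum]
    congr 1
    refine Finset.sum_congr rfl fun i _ => ?_
    simp only [mul_pow]
    field_simp
  rw [rescale, norm_mul, norm_inv, norm_pow, Complex.norm_natCast, mul_left_comm,
    inv_mul_le_iff₀ (by positivity)]
  exact bound t ht u

end WavePackets

section TrigonometricPolynomials

section NormedSpace

variable {E : Type*} [NormedAddCommGroup E] [NormedSpace ℂ E]

/-- The trigonometric polynomial with coefficients `f` on `s`, i.e. the Fourier transform of `f`
restricted to `s`, with the sign convention `e^{-ixk}`. -/
def trigPoly (s : Finset ℤ) (f : ℤ → E) (k : ℝ) : E :=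
  ∑ x ∈ s, Complex.exp (-(Complex.I * x * k)) • f x

lemma deriv_trigPoly (s : Finset ℤ) (f : ℤ → E) :
    deriv (trigPoly s f) = trigPoly s fun x => (-(Complex.I * x)) • f x := by
  funext k
  have hterm (x : ℤ) : HasDerivAt (fun k : ℝ => Complex.exp (-(Complex.I * x * k)) • f x)
      (Complex.exp (-(Complex.I * x * k)) • (-(Complex.I * x)) • f x) k := by
    rw [smul_smul]
    have hexponent : HasDerivAt (fun k : ℝ => Complex.I * x * k) (Complex.I * x) k := by
      simpa using (Complex.ofRealCLM.hasDerivAt (x := k)).const_mul (Complex.I * x)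
    exact hexponent.neg.cexp.smul_const (f x)
  exact (HasDerivAt.fun_sum fun x _ => hterm x).deriv

lemma iteratedDeriv_trigPoly (s : Finset ℤ) (f : ℤ → E) (r : ℕ) :
    iteratedDeriv r (trigPoly s f) = trigPoly s fun x => (-(Complex.I * x)) ^ r • f x := by
  induction r generalizing f with
  | zero => simp
  | succ r ih => simp only [iteratedDeriv_succ', deriv_trigPoly, ih, smul_smul, pow_succ]

end NormedSpace

lemma integral_exp_I_mul_int (n : ℤ) (a : ℝ) :
    ∫ k in a..(a + 2 * π), Complex.exp (Complex.I * n * k) = if n = 0 then 2 * (π : ℂ) else 0 := by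
  split_ifs with hn
  · simp [hn]
  · have hn' : Complex.I * n ≠ 0 := mul_ne_zero Complex.I_ne_zero (by exact_mod_cast hn)
    have hperiod : Complex.I * n * (a + 2 * π : ℝ)
        = Complex.I * n * a + n * (2 * π * Complex.I) := by
      push_cast
      ring
    rw [integral_exp_mul_complex hn', hperiod, Complex.exp_add, Complex.exp_int_mul_two_pi_mul_I,
      mul_one, sub_self, zero_div]

variable {E : Type*} [NormedAddCommGroup E] [InnerProductSpace ℂ E]

lemma integral_inner_trigPoly (s : Finset ℤ) (f g : ℤ → E) (a : ℝ) :
    ∫ k in a..(a + 2 * π), ⟪trigPoly s f k, trigPoly s g k⟫_ℂ = 2 * π * ∑ x ∈ s, ⟪f x, g x⟫_ℂ := by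
  have expand (k : ℝ) : ⟪trigPoly s f k, trigPoly s g k⟫_ℂ
      = ∑ x ∈ s, ∑ y ∈ s, Complex.exp (Complex.I * (x - y : ℤ) * k) * ⟪f x, g y⟫_ℂ := by
    rw [trigPoly, trigPoly, sum_inner]
    refine Finset.sum_congr rfl fun x _ => ?_
    rw [inner_sum]
    refine Finset.sum_congr rfl fun y _ => ?_
    rw [inner_smul_left, inner_smul_right, ← mul_assoc, ← Complex.exp_conj, ← Complex.exp_add]
    congr 2
    simp only [map_neg, map_mul, Complex.conj_I, map_intCast, Complex.conj_ofReal, Int.cast_sub]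
    ring
  simp_rw [expand]
  rw [intervalIntegral.integral_finsetSum fun x _ =>
    (by fun_prop : Continuous _).intervalIntegrable _ _, Finset.mul_sum]
  refine Finset.sum_congr rfl fun x hx => ?_
  rw [intervalIntegral.integral_finsetSum fun y _ =>
    (by fun_prop : Continuous _).intervalIntegrable _ _]
  simp_rw [intervalIntegral.integral_mul_const, integral_exp_I_mul_int, sub_eq_zero, ite_mul,
    zero_mul]
  rw [Finset.sum_ite_eq, if_pos hx]

lemma integral_inner_iteratedDeriv_trigPoly (s : Finset ℤ) (f : ℤ → E) (r : ℕ) (a : ℝ) :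
    ∫ k in a..(a + 2 * π), ⟪trigPoly s f k, iteratedDeriv r (trigPoly s f) k⟫_ℂ
      = 2 * π * ∑ x ∈ s, (-(Complex.I * x)) ^ r * (‖f x‖ : ℂ) ^ 2 := by
  rw [iteratedDeriv_trigPoly, integral_inner_trigPoly]
  congr 2
  funext x
  rw [inner_smul_right, inner_self_eq_norm_sq_to_K]
  rfl

lemma tsum_moment_eq_integral {ψ : ℤ → E} (hψ : ψ.support.Finite) {W : ℝ → E}
    (hW : ∀ k : ℝ, HasSum (fun x : ℤ => Complex.exp (-(Complex.I * x * k)) • ψ x) (W k))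
    (r t : ℕ) (a : ℝ) :
    ((∑' x : ℤ, ((x : ℝ) / t) ^ r * ‖ψ x‖ ^ 2 : ℝ) : ℂ)
      = (2 * π)⁻¹ * Complex.I ^ r *
        ∫ k in a..(a + 2 * π), ((t : ℂ) ^ r)⁻¹ * ⟪W k, iteratedDeriv r W k⟫_ℂ := by
  have hψ₀ (x : ℤ) (hx : x ∉ hψ.toFinset) : ψ x = 0 := by simpa using hx
  have hWs : W = trigPoly hψ.toFinset ψ := by
    funext k
    exact (hW k).unique (hasSum_sum_of_ne_finset_zero fun x hx => by rw [hψ₀ x hx, smul_zero])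
  have hI (x : ℤ) : Complex.I ^ r * (-(Complex.I * x)) ^ r = (x : ℂ) ^ r := by
    rw [← mul_pow, mul_neg, ← mul_assoc, Complex.I_mul_I, neg_one_mul, neg_neg]
  rw [tsum_eq_sum (s := hψ.toFinset) fun x hx => by simp [hψ₀ x hx],
    intervalIntegral.integral_const_mul, hWs, integral_inner_iteratedDeriv_trigPoly]
  push_cast
  rw [Finset.mul_sum, Finset.mul_sum, Finset.mul_sum]
  refine Finset.sum_congr rfl fun x _ => ?_
  rw [div_pow, ← hI]
  have := Real.pi_ne_zero
  field_simp

end TrigonometricPolynomials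

/- This is the method of Grimmett, Janson and Scudo: `k`-derivatives of the Fourier transform
produce moments, and each derivative of `e^{i t θ}` produces a factor `i t θ'`. -/
theorem tendsto_moment_of_hasSum_wavePacket {E : Type*} [NormedAddCommGroup E]
    [InnerProductSpace ℂ E] {ι : Type*} [Fintype ι] {θ : ι → ℝ → ℝ} {p : ι → ℝ → E}
    (hθ : ∀ i, ContDiff ℝ ∞ (θ i)) (hp : ∀ i, ContDiff ℝ ∞ (p i))
    (hpp : ∀ k, Pairwise fun i j => ⟪p i k, p j k⟫_ℂ = 0)
    {ψ : ℕ → ℤ → E} (hψ : ∀ t, (ψ t).support.Finite)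
    (hsum : ∀ t (k : ℝ), HasSum (fun x : ℤ => Complex.exp (-(Complex.I * x * k)) • ψ t x)
      (wavePacket θ p t k))
    (r : ℕ) (a : ℝ) :
    Tendsto (fun t : ℕ => ∑' x : ℤ, ((x : ℝ) / t) ^ r * ‖ψ t x‖ ^ 2) atTop
      (𝓝 ((2 * π)⁻¹ * ∫ k in a..(a + 2 * π), ∑ i, (-deriv (θ i) k) ^ r * ‖p i k‖ ^ 2)) := by
  have hI (y : ℝ) : Complex.I ^ r * (Complex.I * y) ^ r = (-y : ℂ) ^ r := by
    rw [← mul_pow, ← mul_assoc, Complex.I_mul_I, neg_one_mul]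
  have limit_eq :
      (((2 * π)⁻¹ * ∫ k in a..(a + 2 * π), ∑ i, (-deriv (θ i) k) ^ r * ‖p i k‖ ^ 2 : ℝ) : ℂ)
        = (2 * π)⁻¹ * Complex.I ^ r *
        ∫ k in a..(a + 2 * π), ∑ i, (Complex.I * deriv (θ i) k) ^ r * (‖p i k‖ : ℂ) ^ 2 := by
    rw [mul_assoc, ← intervalIntegral.integral_const_mul (Complex.I ^ r)]
    push_cast [← intervalIntegral.integral_ofReal]
    simp_rw [Finset.mul_sum, ← mul_assoc, hI]
  rw [← tendsto_ofReal_iff, limit_eq]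
  simp_rw [fun t => tsum_moment_eq_integral (hψ t) (hsum t) r t a]
  exact (tendsto_integral_inner_iteratedDeriv_wavePacket hθ hp hpp r
    (by linarith [Real.pi_pos])).const_mul _

section Involutions

section Module

variable {E : Type*} [AddCommGroup E] [Module ℂ E] {T : E →ₗ[ℂ] E}

/-- The component of `ψ` in the `σ`-eigenspace of an involution `T`, for a sign `σ = ±1`. -/
def eigenpart (T : E →ₗ[ℂ] E) (σ : ℤˣ) (ψ : E) : E := (1 / 2 : ℂ) • (ψ + (σ : ℂ) • T ψ)

lemma sum_eigenpart (T : E →ₗ[ℂ] E) (ψ : E) : ∑ σ, eigenpart T σ ψ = ψ := by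
  simp only [UnitsInt.univ, Finset.sum_pair (by decide : (1 : ℤˣ) ≠ -1), eigenpart]
  push_cast
  module

lemma intUnits_mul_self (σ : ℤˣ) : (σ : ℂ) * σ = 1 := by
  exact_mod_cast Int.units_coe_mul_self σ

lemma apply_eigenpart (hT : Function.Involutive T) (σ : ℤˣ) (ψ : E) :
    T (eigenpart T σ ψ) = (σ : ℂ) • eigenpart T σ ψ := by
  rw [eigenpart, map_smul, map_add, map_smul, hT ψ, smul_comm (σ : ℂ), smul_add (σ : ℂ),
    smul_smul (σ : ℂ), intUnits_mul_self, one_smul, add_comm]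

lemma iterate_apply_eq_sum_eigenpart (T : E →ₗ[ℂ] E) {U : E →ₗ[ℂ] E} {μ : ℤˣ → ℂ} {ψ : E}
    (hU : ∀ σ, U (eigenpart T σ ψ) = μ σ • eigenpart T σ ψ) (t : ℕ) :
    U^[t] ψ = ∑ σ, μ σ ^ t • eigenpart T σ ψ := by
  induction t with
  | zero => simp only [Function.iterate_zero_apply, pow_zero, one_smul, sum_eigenpart]
  | succ t ih =>
    simp only [Function.iterate_succ_apply', ih, map_sum, map_smul, hU, smul_smul, pow_succ]

end Module

variable {E : Type*} [NormedAddCommGroup E] [InnerProductSpace ℂ E] {T : E →ₗ[ℂ] E}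

lemma inner_eigenpart_eq_zero (hT : Function.Involutive T) (hsymm : T.IsSymmetric) (ψ : E) :
    Pairwise fun σ τ => ⟪eigenpart T σ ψ, eigenpart T τ ψ⟫_ℂ = 0 := by
  intro σ τ hστ
  have hτ : (τ : ℂ) = -σ := by
    rw [Int.units_ne_iff_eq_neg.1 hστ]
    simp
  have h := hsymm (eigenpart T σ ψ) (eigenpart T τ ψ)
  rw [apply_eigenpart hT, apply_eigenpart hT, inner_smul_left, inner_smul_right, hτ,
    map_intCast, neg_mul, self_eq_neg] at h
  exact (mul_eq_zero.1 h).resolve_left (by exact_mod_cast σ.ne_zero)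

lemma norm_eigenpart_sq (hT : Function.Involutive T) (hsymm : T.IsSymmetric) (σ : ℤˣ) (ψ : E) :
    ‖eigenpart T σ ψ‖ ^ 2 = (‖ψ‖ ^ 2 + σ * (⟪ψ, T ψ⟫_ℂ).re) / 2 := by
  have hσ : ‖(σ : ℂ)‖ = 1 := by
    rcases Int.units_eq_one_or σ with rfl | rfl <;> simp
  have hnorm : ‖(σ : ℂ) • T ψ‖ ^ 2 = ‖ψ‖ ^ 2 := by
    rw [norm_smul, hσ, one_mul, ← inner_self_eq_norm_sq (𝕜 := ℂ), hsymm, hT ψ,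
      inner_self_eq_norm_sq]
  have h := norm_add_sq (𝕜 := ℂ) ψ ((σ : ℂ) • T ψ)
  rw [hnorm, inner_smul_right] at h
  have hre : RCLike.re ((σ : ℂ) * ⟪ψ, T ψ⟫_ℂ) = σ * (⟪ψ, T ψ⟫_ℂ).re := by
    simp
  rw [eigenpart, norm_smul, mul_pow, h, hre]
  norm_num
  ring

end Involutions

section NearestNeighbourSteps

variable {E : Type*} [NormedAddCommGroup E] [NormedSpace ℂ E] {ψ : ℤ → E} {Φ : E} {k : ℝ}

lemma hasSum_exp_smul_shift
    (h : HasSum (fun x : ℤ => Complex.exp (-(Complex.I * x * k)) • ψ x) Φ) (n : ℤ) :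
    HasSum (fun x : ℤ => Complex.exp (-(Complex.I * x * k)) • ψ (x + n))
      (Complex.exp (Complex.I * n * k) • Φ) := by
  refine (((Equiv.addRight n).hasSum_iff.2 h).const_smul
    (Complex.exp (Complex.I * n * k))).congr_fun fun x => ?_
  simp only [Function.comp_apply, Equiv.coe_addRight, smul_smul, ← Complex.exp_add]
  congr 2
  push_cast
  ring

lemma hasSum_exp_smul_step (A B C : E →L[ℂ] E)
    (h : HasSum (fun x : ℤ => Complex.exp (-(Complex.I * x * k)) • ψ x) Φ) :
    HasSum (fun x : ℤ =>
        Complex.exp (-(Complex.I * x * k)) • (A (ψ (x + 1)) + B (ψ x) + C (ψ (x - 1))))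
      (Complex.exp (Complex.I * k) • A Φ + B Φ + Complex.exp (-(Complex.I * k)) • C Φ) := by
  have hA := A.hasSum (hasSum_exp_smul_shift h 1)
  have hC := C.hasSum (hasSum_exp_smul_shift h (-1))
  simpa [Function.comp_def, smul_add, sub_eq_add_neg] using (hA.add (B.hasSum h)).add hC

end NearestNeighbourSteps

section FourierTransform

/-- The value `Ψ_t(x)` as an element of the Hilbert space `ℂ²` (`qwalk` takes values in
`Fin 2 → ℂ`, which carries the supremum norm). -/
def spinor (ρ ν : ℝ) (α β : ℂ) (t : ℕ) (x : ℤ) : EuclideanSpace ℂ (Fin 2) :=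
  WithLp.toLp 2 (qwalk ρ ν α β t x)

/-- The Fourier symbol of one step of the walk. -/
def symbol (ρ ν k : ℝ) : Matrix (Fin 2) (Fin 2) ℂ :=
  Complex.exp (Complex.I * k) • Bm ρ ν + B0 ρ ν + Complex.exp (-(Complex.I * k)) • Bp ρ ν

variable (ρ ν : ℝ) (α β : ℂ)

lemma norm_spinor_sq (t : ℕ) (x : ℤ) : ‖spinor ρ ν α β t x‖ ^ 2 = qprob ρ ν α β t x := by
  rw [EuclideanSpace.norm_sq_eq, Fin.sum_univ_two]
  rfl

lemma spinor_zero_zero : spinor ρ ν α β 0 0 = !₂[α, β] := by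
  simp [spinor, qwalk]

lemma spinor_zero_of_ne {x : ℤ} (hx : x ≠ 0) : spinor ρ ν α β 0 x = 0 := by
  simp [spinor, qwalk, hx]

lemma spinor_succ (t : ℕ) (x : ℤ) :
    spinor ρ ν α β (t + 1) x = Matrix.toEuclideanCLM (𝕜 := ℂ) (Bm ρ ν) (spinor ρ ν α β t (x + 1))
      + Matrix.toEuclideanCLM (𝕜 := ℂ) (B0 ρ ν) (spinor ρ ν α β t x)
      + Matrix.toEuclideanCLM (𝕜 := ℂ) (Bp ρ ν) (spinor ρ ν α β t (x - 1)) := by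
  simp only [spinor, Matrix.toEuclideanCLM_toLp, ← WithLp.toLp_add]
  rfl

lemma spinor_eq_zero_of_lt_abs {t : ℕ} {x : ℤ} (hx : t < |x|) : spinor ρ ν α β t x = 0 := by
  induction t generalizing x with
  | zero => exact spinor_zero_of_ne ρ ν α β (abs_pos.1 hx)
  | succ t ih =>
    push_cast at hx
    rw [spinor_succ, ih (by grind), ih (by grind), ih (by grind)]
    simp

lemma finite_support_spinor (t : ℕ) : (spinor ρ ν α β t).support.Finite := by
  refine (Set.finite_Icc (-t : ℤ) t).subset fun x hx => abs_le.1 (not_lt.1 fun hlt => hx ?_)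
  exact spinor_eq_zero_of_lt_abs ρ ν α β hlt

lemma toEuclideanLin_symbol_apply (k : ℝ) (Φ : EuclideanSpace ℂ (Fin 2)) :
    Matrix.toEuclideanLin (symbol ρ ν k) Φ =
      Complex.exp (Complex.I * k) • Matrix.toEuclideanCLM (𝕜 := ℂ) (Bm ρ ν) Φ
        + Matrix.toEuclideanCLM (𝕜 := ℂ) (B0 ρ ν) Φ
        + Complex.exp (-(Complex.I * k)) • Matrix.toEuclideanCLM (𝕜 := ℂ) (Bp ρ ν) Φ := by
  simp only [symbol, map_add, map_smul, LinearMap.add_apply, LinearMap.smul_apply,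
    ← Matrix.coe_toEuclideanCLM_eq_toEuclideanLin]
  rfl

lemma hasSum_exp_smul_spinor (t : ℕ) (k : ℝ) :
    HasSum (fun x : ℤ => Complex.exp (-(Complex.I * x * k)) • spinor ρ ν α β t x)
      ((Matrix.toEuclideanLin (symbol ρ ν k))^[t] !₂[α, β]) := by
  induction t with
  | zero =>
    have h := hasSum_single (f := fun x : ℤ =>
      Complex.exp (-(Complex.I * x * k)) • spinor ρ ν α β 0 x) 0
      fun x hx => by rw [spinor_zero_of_ne ρ ν α β hx, smul_zero]
    simpa [spinor_zero_zero] using h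
  | succ t ih =>
    rw [Function.iterate_succ_apply']
    simp only [spinor_succ]
    rw [toEuclideanLin_symbol_apply]
    exact hasSum_exp_smul_step _ _ _ ih

end FourierTransform

section Spectrum

/-- The cosine of the eigenphases of `-i · symbol`, as a function of the shifted momentum
`u = k - ν`. -/
def cosPhase (ρ ν u : ℝ) : ℝ := ρ * rz ρ * (Real.sin u - Real.sin ν)

/-- The sine of the eigenphases of `-i · symbol`. -/
def sinPhase (ρ ν u : ℝ) : ℝ := Real.sqrt (1 - cosPhase ρ ν u ^ 2)

/-- The two eigenvalues of the symbol never coincide. -/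
def SpectralGap (ρ ν : ℝ) : Prop := ∀ u, |cosPhase ρ ν u| < 1

/-- The upper left entry of the matrix `sinMatrix`, which carries the imaginary part of
`-i · symbol`. -/
def sinDiag (ρ ν u : ℝ) : ℝ := ρ * rz ρ * (Real.cos ν + Real.cos u)

/-- The upper right entry of `sinMatrix`. -/
def sinOffDiag (ρ ν u : ℝ) : ℂ :=
  ρ ^ 2 - rz ρ ^ 2 * Complex.exp (-(Complex.I * (u + ν)))

/-- The Hermitian matrix `H` with `symbol (u + ν) = i (cosPhase + i H)`; its eigenvalues are
`± sinPhase`. -/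
def sinMatrix (ρ ν u : ℝ) : Matrix (Fin 2) (Fin 2) ℂ :=
  !![(sinDiag ρ ν u : ℂ), sinOffDiag ρ ν u; conj (sinOffDiag ρ ν u), -(sinDiag ρ ν u : ℂ)]

/-- The symmetric involution whose eigenspaces are those of the symbol. -/
def reflection (ρ ν u : ℝ) : EuclideanSpace ℂ (Fin 2) →ₗ[ℂ] EuclideanSpace ℂ (Fin 2) :=
  Matrix.toEuclideanLin ((sinPhase ρ ν u : ℂ)⁻¹ • sinMatrix ρ ν u)

/-- The phases of the eigenvalues of the symbol, indexed by a sign. -/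
def eigenphase (ρ ν : ℝ) (σ : ℤˣ) (u : ℝ) : ℝ := π / 2 + σ * Real.arccos (cosPhase ρ ν u)

variable {ρ ν : ℝ}

lemma rz_sq (hρ : ρ ∈ Set.Ioo (0 : ℝ) 1) : rz ρ ^ 2 = 1 - ρ ^ 2 :=
  Real.sq_sqrt (by nlinarith [hρ.1, hρ.2])

lemma rz_pos (hρ : ρ ∈ Set.Ioo (0 : ℝ) 1) : 0 < rz ρ :=
  Real.sqrt_pos.2 (by nlinarith [hρ.1, hρ.2])

lemma mul_rz_le_half (hρ : ρ ∈ Set.Ioo (0 : ℝ) 1) : ρ * rz ρ ≤ 1 / 2 := by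
  nlinarith [sq_nonneg (ρ - rz ρ), rz_sq hρ]

lemma spectralGap_of_ne (hρ : ρ ∈ Set.Ioo (0 : ℝ) 1)
    (hexc : ∀ n : ℤ, ¬(ρ = 1 / Real.sqrt 2 ∧ ν = π / 2 + n * π)) : SpectralGap ρ ν := by
  intro u
  by_contra! hu
  have hm := mul_rz_le_half hρ
  have hm₀ : 0 < ρ * rz ρ := mul_pos hρ.1 (rz_pos hρ)
  have hsin : |Real.sin u - Real.sin ν| ≤ 1 + |Real.sin ν| :=
    (abs_sub _ _).trans (by gcongr; exact Real.abs_sin_le_one u)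
  rw [cosPhase, abs_mul, abs_of_pos hm₀] at hu
  have hsinν : |Real.sin ν| = 1 := by nlinarith [Real.abs_sin_le_one ν]
  have hcosν : Real.cos ν = 0 := by
    have := Real.sin_sq_add_cos_sq ν
    rw [← sq_abs (Real.sin ν), hsinν] at this
    nlinarith
  have hρ_eq : ρ = rz ρ := by nlinarith [sq_nonneg (ρ - rz ρ), rz_sq hρ]
  obtain ⟨n, hn⟩ := Real.cos_eq_zero_iff.1 hcosν
  refine hexc n ⟨?_, by rw [hn]; ring⟩
  rw [one_div, ← Real.sqrt_inv, eq_comm, Real.sqrt_eq_iff_mul_self_eq (by norm_num) hρ.1.le]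
  have := rz_sq hρ
  rw [← hρ_eq] at this
  linarith

lemma cosPhase_sq_lt_one (hgap : SpectralGap ρ ν) (u : ℝ) : cosPhase ρ ν u ^ 2 < 1 :=
  (sq_lt_one_iff_abs_lt_one _).2 (hgap u)

lemma sinPhase_pos (hgap : SpectralGap ρ ν) (u : ℝ) : 0 < sinPhase ρ ν u :=
  Real.sqrt_pos.2 (sub_pos.2 (cosPhase_sq_lt_one hgap u))

lemma sinPhase_sq (hgap : SpectralGap ρ ν) (u : ℝ) :
    sinPhase ρ ν u ^ 2 = 1 - cosPhase ρ ν u ^ 2 :=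
  Real.sq_sqrt (sub_pos.2 (cosPhase_sq_lt_one hgap u)).le

lemma normSq_sinOffDiag (ρ ν u : ℝ) : Complex.normSq (sinOffDiag ρ ν u)
    = ρ ^ 4 + rz ρ ^ 4 - 2 * (ρ * rz ρ) ^ 2 * Real.cos (u + ν) := by
  have hexp : sinOffDiag ρ ν u
      = ⟨ρ ^ 2 - rz ρ ^ 2 * Real.cos (u + ν), rz ρ ^ 2 * Real.sin (u + ν)⟩ := by
    have h : -(Complex.I * (u + ν)) = ((-(u + ν) : ℝ) : ℂ) * Complex.I := by push_cast; ring
    rw [sinOffDiag, h, Complex.exp_ofReal_mul_I, Real.cos_neg, Real.sin_neg,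
      Complex.mk_eq_add_mul_I]
    push_cast
    ring
  rw [hexp, Complex.normSq_mk]
  linear_combination rz ρ ^ 4 * Real.sin_sq_add_cos_sq (u + ν)

lemma sinDiag_sq_add_normSq_sinOffDiag (hρ : ρ ∈ Set.Ioo (0 : ℝ) 1) (ν u : ℝ) :
    sinDiag ρ ν u ^ 2 + Complex.normSq (sinOffDiag ρ ν u) = 1 - cosPhase ρ ν u ^ 2 := by
  rw [normSq_sinOffDiag, sinDiag, cosPhase, Real.cos_add]
  have hone : (ρ ^ 2 + rz ρ ^ 2) ^ 2 = 1 := by rw [rz_sq hρ]; ring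
  linear_combination (ρ * rz ρ) ^ 2 * Real.sin_sq_add_cos_sq u
    + (ρ * rz ρ) ^ 2 * Real.sin_sq_add_cos_sq ν + hone

lemma sinMatrix_mul_self (hρ : ρ ∈ Set.Ioo (0 : ℝ) 1) (ν u : ℝ) :
    sinMatrix ρ ν u * sinMatrix ρ ν u = (((1 - cosPhase ρ ν u ^ 2 : ℝ) : ℂ)) • 1 := by
  have hentry := congrArg ((↑) : ℝ → ℂ) (sinDiag_sq_add_normSq_sinOffDiag hρ ν u)
  rw [Complex.ofReal_add, ← Complex.mul_conj, Complex.ofReal_pow] at hentry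
  rw [← hentry, sinMatrix]
  ext i j
  fin_cases i <;> fin_cases j <;> simp [Matrix.mul_apply, Fin.sum_univ_two] <;> ring

lemma isHermitian_sinMatrix (ρ ν u : ℝ) : (sinMatrix ρ ν u).IsHermitian := by
  ext i j
  fin_cases i <;> fin_cases j <;> simp [sinMatrix]

lemma I_mul_cosPhase_add_I_mul_sinDiag (ρ ν u : ℝ) :
    Complex.I * (cosPhase ρ ν u + Complex.I * sinDiag ρ ν u)
      = -(ρ * rz ρ) * (Complex.exp (Complex.I * ν) + Complex.exp (-(Complex.I * u))) := by
  have hexp : Complex.exp (-(Complex.I * u)) = Complex.cos u - Complex.sin u * Complex.I := by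
    rw [← mul_neg, mul_comm, Complex.exp_mul_I, Complex.cos_neg, Complex.sin_neg, neg_mul,
      sub_eq_add_neg]
  rw [hexp, mul_comm Complex.I (ν : ℂ), Complex.exp_mul_I, cosPhase, sinDiag]
  push_cast
  linear_combination ρ * rz ρ * (Complex.cos ν + Complex.cos u) * Complex.I_sq

lemma I_mul_cosPhase_sub_I_mul_sinDiag (ρ ν u : ℝ) :
    Complex.I * (cosPhase ρ ν u - Complex.I * sinDiag ρ ν u)
      = ρ * rz ρ * (Complex.exp (-(Complex.I * ν)) + Complex.exp (Complex.I * u)) := by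
  have h := congrArg conj (I_mul_cosPhase_add_I_mul_sinDiag ρ ν u)
  simp only [map_mul, map_add, map_neg, Complex.conj_I, Complex.conj_ofReal, ← Complex.exp_conj]
    at h
  rw [← neg_inj]
  convert h using 1 <;> ring_nf

lemma symbol_add (ρ ν u : ℝ) : symbol ρ ν (u + ν)
    = !![-(ρ * rz ρ) * (Complex.exp (Complex.I * ν) + Complex.exp (-(Complex.I * u))),
        -sinOffDiag ρ ν u; -conj (sinOffDiag ρ ν u),
        ρ * rz ρ * (Complex.exp (-(Complex.I * ν)) + Complex.exp (Complex.I * u))] := by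
  have hconj : conj (az ρ ν) = ρ * Complex.exp (-(Complex.I * ν)) := by
    rw [az, map_mul, Complex.conj_ofReal, ← Complex.exp_conj, map_mul, Complex.conj_I,
      Complex.conj_ofReal, neg_mul]
  have hcancel : Complex.exp (-(Complex.I * (u + ν))) * Complex.exp (Complex.I * ν)
      = Complex.exp (-(Complex.I * u)) := by
    rw [← Complex.exp_add]
    ring_nf
  have hcancel' : Complex.exp (Complex.I * (u + ν)) * Complex.exp (-(Complex.I * ν))
      = Complex.exp (Complex.I * u) := by
    rw [← Complex.exp_add]
    ring_nf
  have hoff : conj (sinOffDiag ρ ν u) = ρ ^ 2 - rz ρ ^ 2 * Complex.exp (Complex.I * (u + ν)) := by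
    simp [sinOffDiag, ← Complex.exp_conj]
  rw [hoff, ← hcancel, ← hcancel', symbol, Bm, B0, Bp, hconj, az, sinOffDiag, Matrix.smul_of,
    Matrix.smul_of, Matrix.of_add_of, Matrix.of_add_of, EmbeddingLike.apply_eq_iff_eq]
  ext i j
  fin_cases i <;> fin_cases j <;> simp <;> ring

lemma symbol_add_eq_I_smul (ρ ν u : ℝ) : symbol ρ ν (u + ν)
    = Complex.I • ((cosPhase ρ ν u : ℂ) • (1 : Matrix (Fin 2) (Fin 2) ℂ)
        + Complex.I • sinMatrix ρ ν u) := by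
  have hI (z : ℂ) : Complex.I * (Complex.I * z) = -z := by
    rw [← mul_assoc, Complex.I_mul_I, neg_one_mul]
  rw [symbol_add, ← I_mul_cosPhase_add_I_mul_sinDiag, ← I_mul_cosPhase_sub_I_mul_sinDiag]
  ext i j
  fin_cases i <;> fin_cases j <;> simp [sinMatrix, hI, sub_eq_add_neg]

lemma isSymmetric_reflection (ρ ν u : ℝ) : (reflection ρ ν u).IsSymmetric := by
  rw [reflection, Matrix.isSymmetric_toEuclideanLin_iff, Matrix.IsHermitian,
    Matrix.conjTranspose_smul, isHermitian_sinMatrix ρ ν u]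
  simp

lemma involutive_reflection (hρ : ρ ∈ Set.Ioo (0 : ℝ) 1) (hgap : SpectralGap ρ ν) (u : ℝ) :
    Function.Involutive (reflection ρ ν u) := by
  have hS : (sinPhase ρ ν u : ℂ) ≠ 0 := by exact_mod_cast (sinPhase_pos hgap u).ne'
  intro ψ
  rw [reflection, ← LinearMap.comp_apply, ← Matrix.toLpLin_mul_same, smul_mul_smul_comm,
    sinMatrix_mul_self hρ, ← sinPhase_sq hgap, smul_smul]
  have hone : (sinPhase ρ ν u : ℂ)⁻¹ * (sinPhase ρ ν u : ℂ)⁻¹ * ((sinPhase ρ ν u ^ 2 : ℝ) : ℂ)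
      = 1 := by
    push_cast
    field_simp
  rw [hone, one_smul, Matrix.toLpLin_one, LinearMap.id_apply]

lemma exp_I_eigenphase (hgap : SpectralGap ρ ν) (σ : ℤˣ) (u : ℝ) :
    Complex.exp (Complex.I * eigenphase ρ ν σ u)
      = Complex.I * (cosPhase ρ ν u + Complex.I * sinPhase ρ ν u * σ) := by
  have hcos : Complex.cos (Real.arccos (cosPhase ρ ν u)) = cosPhase ρ ν u := by
    rw [← Complex.ofReal_cos,
      Real.cos_arccos (abs_le.1 (hgap u).le).1 (abs_le.1 (hgap u).le).2]
  have hsin : Complex.sin (Real.arccos (cosPhase ρ ν u)) = sinPhase ρ ν u := by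
    rw [← Complex.ofReal_sin, Real.sin_arccos, sinPhase]
  have hhalf : Complex.I * (π / 2 : ℂ) = π / 2 * Complex.I := mul_comm _ _
  rw [eigenphase, Complex.ofReal_add, mul_add, Complex.exp_add]
  push_cast
  rw [hhalf, Complex.exp_pi_div_two_mul_I, mul_comm Complex.I (_ * _), Complex.exp_mul_I]
  rcases Int.units_eq_one_or σ with rfl | rfl
  · simp only [Units.val_one, Int.cast_one, one_mul, hcos, hsin]
    ring
  · simp only [Units.val_neg, Units.val_one, Int.cast_neg, Int.cast_one, neg_mul, one_mul,
      Complex.cos_neg, Complex.sin_neg, hcos, hsin]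
    ring

lemma toEuclideanLin_symbol_eigenpart (hρ : ρ ∈ Set.Ioo (0 : ℝ) 1) (hgap : SpectralGap ρ ν)
    (σ : ℤˣ) (u : ℝ) (ψ : EuclideanSpace ℂ (Fin 2)) :
    Matrix.toEuclideanLin (symbol ρ ν (u + ν)) (eigenpart (reflection ρ ν u) σ ψ)
      = Complex.exp (Complex.I * eigenphase ρ ν σ u) • eigenpart (reflection ρ ν u) σ ψ := by
  have hS : (sinPhase ρ ν u : ℂ) ≠ 0 := by exact_mod_cast (sinPhase_pos hgap u).ne'
  have hsin : Matrix.toEuclideanLin (sinMatrix ρ ν u)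
      = (sinPhase ρ ν u : ℂ) • reflection ρ ν u := by
    rw [reflection, map_smul, smul_smul, mul_inv_cancel₀ hS, one_smul]
  rw [symbol_add_eq_I_smul, map_smul, map_add, map_smul, map_smul, hsin, Matrix.toLpLin_one,
    exp_I_eigenphase hgap]
  simp only [LinearMap.smul_apply, LinearMap.add_apply, LinearMap.id_apply,
    apply_eigenpart (involutive_reflection hρ hgap u)]
  module

lemma hasSum_spinor_wavePacket (hρ : ρ ∈ Set.Ioo (0 : ℝ) 1) (hgap : SpectralGap ρ ν) (α β : ℂ)
    (t : ℕ) (k : ℝ) :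
    HasSum (fun x : ℤ => Complex.exp (-(Complex.I * x * k)) • spinor ρ ν α β t x)
      (wavePacket (fun σ k => eigenphase ρ ν σ (k - ν))
        (fun σ k => eigenpart (reflection ρ ν (k - ν)) σ !₂[α, β]) t k) := by
  have hsymbol (σ : ℤˣ) := toEuclideanLin_symbol_eigenpart hρ hgap σ (k - ν) !₂[α, β]
  rw [sub_add_cancel] at hsymbol
  convert hasSum_exp_smul_spinor ρ ν α β t k using 1
  rw [iterate_apply_eq_sum_eigenpart _ hsymbol]
  refine Finset.sum_congr rfl fun σ _ => ?_
  rw [wave, ← Complex.exp_nat_mul]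
  push_cast
  ring_nf

lemma contDiff_cosPhase (ρ ν : ℝ) : ContDiff ℝ ∞ (cosPhase ρ ν) :=
  contDiff_const.mul (Real.contDiff_sin.sub contDiff_const)

lemma contDiff_sinPhase (hgap : SpectralGap ρ ν) : ContDiff ℝ ∞ (sinPhase ρ ν) :=
  (contDiff_const.sub ((contDiff_cosPhase ρ ν).pow 2)).sqrt
    fun u => (sub_pos.2 (cosPhase_sq_lt_one hgap u)).ne'

lemma contDiff_eigenphase (hgap : SpectralGap ρ ν) (σ : ℤˣ) :
    ContDiff ℝ ∞ (eigenphase ρ ν σ) := by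
  refine contDiff_const.add (contDiff_const.mul (contDiff_iff_contDiffAt.2 fun u => ?_))
  have hu := abs_lt.1 (hgap u)
  exact (Real.contDiffAt_arccos hu.1.ne' hu.2.ne).comp u (contDiff_cosPhase ρ ν).contDiffAt

lemma contDiff_sinMatrix (ρ ν : ℝ) (i j : Fin 2) :
    ContDiff ℝ ∞ fun u => sinMatrix ρ ν u i j := by
  have hdiag : ContDiff ℝ ∞ fun u => (sinDiag ρ ν u : ℂ) :=
    Complex.ofRealCLM.contDiff.comp (contDiff_const.mul (contDiff_const.add Real.contDiff_cos))
  have hoff : ContDiff ℝ ∞ (sinOffDiag ρ ν) :=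
    contDiff_const.sub (contDiff_const.mul
      (contDiff_const.mul (Complex.ofRealCLM.contDiff.add contDiff_const)).neg.cexp)
  have hconj : ContDiff ℝ ∞ fun u => conj (sinOffDiag ρ ν u) :=
    Complex.conjCLE.contDiff.comp hoff
  fin_cases i <;> fin_cases j
  exacts [hdiag, hoff, hconj, hdiag.neg]

lemma contDiff_eigenpart_reflection (hgap : SpectralGap ρ ν) (σ : ℤˣ)
    (ψ : EuclideanSpace ℂ (Fin 2)) :
    ContDiff ℝ ∞ fun u => eigenpart (reflection ρ ν u) σ ψ := by
  have hS : ContDiff ℝ ∞ fun u => (sinPhase ρ ν u : ℂ)⁻¹ :=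
    (Complex.ofRealCLM.contDiff.comp (contDiff_sinPhase hgap)).inv fun u =>
      Complex.ofReal_ne_zero.2 (sinPhase_pos hgap u).ne'
  have hT : ContDiff ℝ ∞ fun u => reflection ρ ν u ψ := by
    simp only [reflection, map_smul, LinearMap.smul_apply]
    refine hS.smul ((contDiff_piLp 2).2 fun i => ?_)
    simp only [Matrix.ofLp_toLpLin, Matrix.toLin'_apply, Matrix.mulVec, dotProduct]
    exact ContDiff.sum fun j _ => (contDiff_sinMatrix ρ ν i j).mul contDiff_const
  exact (contDiff_const.add (hT.const_smul _)).const_smul _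

end Spectrum

section ChangeOfVariables

variable {f v v' w : ℝ → ℝ} {a b c : ℝ}

lemma intervalIntegrable_mul_of_hasDerivAt_pos (hab : a ≤ b) (hf : Continuous f)
    (hv : ∀ u, HasDerivAt v (v' u) u) (hpos : ∀ u ∈ Set.Ioo a b, 0 < v' u)
    (hw : ∀ u ∈ Set.Ioo a b, w (v u) * v' u = 1) :
    IntervalIntegrable (fun x => f x * w x) volume (v a) (v b) ∧
      ∫ x in v a..v b, f x * w x = ∫ u in a..b, f (v u) := by
  have hcont : Continuous v := continuous_iff_continuousAt.2 fun u => (hv u).continuousAt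
  have hmono : StrictMonoOn v (Set.Icc a b) :=
    strictMonoOn_of_deriv_pos (convex_Icc a b) hcont.continuousOn fun u hu => by
      rw [interior_Icc] at hu
      simpa only [(hv u).deriv] using hpos u hu
  have hinj : Set.InjOn v (Set.Ioo a b) := hmono.injOn.mono Set.Ioo_subset_Icc_self
  have himage : v '' Set.Ioo a b = Set.Ioo (v a) (v b) :=
    hcont.continuousOn.image_Ioo_of_strictMonoOn hab hmono
  have hle : v a ≤ v b := hmono.monotoneOn (Set.left_mem_Icc.2 hab) (Set.right_mem_Icc.2 hab) hab
  have hderiv : ∀ u ∈ Set.Ioo a b, HasDerivWithinAt v (v' u) (Set.Ioo a b) u :=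
    fun u _ => (hv u).hasDerivWithinAt
  have hweight : ∀ u ∈ Set.Ioo a b, |v' u| • (f (v u) * w (v u)) = f (v u) := fun u hu => by
    rw [abs_of_pos (hpos u hu), smul_eq_mul]
    linear_combination f (v u) * hw u hu
  rw [intervalIntegrable_iff_integrableOn_Ioo_of_le hle, intervalIntegral.integral_of_le hle,
    integral_Ioc_eq_integral_Ioo, ← himage,
    integrableOn_image_iff_integrableOn_abs_deriv_smul measurableSet_Ioo hderiv hinj,
    integral_image_eq_integral_abs_deriv_smul measurableSet_Ioo hderiv hinj,
    integrableOn_congr_fun hweight measurableSet_Ioo,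
    setIntegral_congr_fun measurableSet_Ioo hweight, intervalIntegral.integral_of_le hab,
    integral_Ioc_eq_integral_Ioo]
  exact ⟨(hf.comp hcont).continuousOn.integrableOn_Icc.mono_set Set.Ioo_subset_Icc_self, rfl⟩

lemma intervalIntegrable_mul_of_hasDerivAt_neg (hab : a ≤ b) (hf : Continuous f)
    (hv : ∀ u, HasDerivAt v (v' u) u) (hneg : ∀ u ∈ Set.Ioo a b, v' u < 0)
    (hw : ∀ u ∈ Set.Ioo a b, w (v u) * -v' u = 1) :
    IntervalIntegrable (fun x => f x * w x) volume (v b) (v a) ∧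
      ∫ x in v b..v a, f x * w x = ∫ u in a..b, f (v u) := by
  have hmem {u : ℝ} (hu : u ∈ Set.Ioo (-b) (-a)) : -u ∈ Set.Ioo a b :=
    ⟨lt_neg.2 hu.2, neg_lt.2 hu.1⟩
  have hderiv (u : ℝ) : HasDerivAt (fun u => v (-u)) (-v' (-u)) u := by
    simpa [Function.comp_def] using (hv (-u)).comp u (hasDerivAt_neg u)
  have h := intervalIntegrable_mul_of_hasDerivAt_pos (neg_le_neg hab) hf hderiv
    (fun u hu => neg_pos.2 (hneg _ (hmem hu))) fun u hu => hw _ (hmem hu)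
  simpa only [neg_neg, intervalIntegral.integral_comp_neg fun u => f (v u)] using h

lemma intervalIntegrable_mul_add_of_unimodal {w₁ w₂ : ℝ → ℝ} (hac : a ≤ c) (hcb : c ≤ b)
    (hf : Continuous f) (hv : ∀ u, HasDerivAt v (v' u) u) (hvab : v a = v b)
    (hpos : ∀ u ∈ Set.Ioo a c, 0 < v' u) (hneg : ∀ u ∈ Set.Ioo c b, v' u < 0)
    (hw₁ : ∀ u ∈ Set.Ioo c b, w₁ (v u) * -v' u = 1)
    (hw₂ : ∀ u ∈ Set.Ioo a c, w₂ (v u) * v' u = 1) :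
    IntervalIntegrable (fun x => f x * (w₁ x + w₂ x)) volume (v a) (v c) ∧
      ∫ x in v a..v c, f x * (w₁ x + w₂ x) = ∫ u in a..b, f (v u) := by
  have hcont : Continuous fun u => f (v u) :=
    hf.comp (continuous_iff_continuousAt.2 fun u => (hv u).continuousAt)
  obtain ⟨hint₂, heq₂⟩ := intervalIntegrable_mul_of_hasDerivAt_pos hac hf hv hpos hw₂
  obtain ⟨hint₁, heq₁⟩ := intervalIntegrable_mul_of_hasDerivAt_neg hcb hf hv hneg hw₁
  rw [← hvab] at hint₁ heq₁
  simp only [mul_add]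
  refine ⟨hint₁.add hint₂, ?_⟩
  rw [intervalIntegral.integral_add hint₁ hint₂, heq₁, heq₂, add_comm,
    intervalIntegral.integral_add_adjacent_intervals (hcont.intervalIntegrable _ _)
      (hcont.intervalIntegrable _ _)]

lemma integral_neg_self_mul_of_even {h : ℝ} (hw : Function.Even w)
    (hf : IntervalIntegrable (fun x => f x * w x) volume 0 h)
    (hf' : IntervalIntegrable (fun x => f (-x) * w x) volume 0 h) :
    ∫ x in (-h)..h, f x * w x = (∫ x in 0..h, f x * w x) + ∫ x in 0..h, f (-x) * w x := by
  have hneg : (fun x => f (-x) * w x) = fun x => f (-x) * w (-x) := by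
    funext x
    rw [hw x]
  have hleft : IntervalIntegrable (fun x => f x * w x) volume (-h) 0 := by
    rw [hneg, IntervalIntegrable.iff_comp_neg] at hf'
    simpa using hf'.symm
  rw [← intervalIntegral.integral_add_adjacent_intervals hleft hf, hneg,
    intervalIntegral.integral_comp_neg fun x => f x * w x, neg_zero, add_comm]

end ChangeOfVariables

section GroupVelocity

/-- The group velocity of the eigenphase with sign `-1`; the other one is its negative. -/
def groupVelocity (ρ ν u : ℝ) : ℝ := ρ * rz ρ * Real.cos u / sinPhase ρ ν u

/-- The derivative of `groupVelocity` multiplied by `sinPhase`. -/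
def velocitySlope (ρ ν u : ℝ) : ℝ :=
  cosPhase ρ ν u * groupVelocity ρ ν u ^ 2 - ρ * rz ρ * Real.sin u

variable {ρ ν : ℝ}

lemma hasDerivAt_cosPhase (ρ ν u : ℝ) : HasDerivAt (cosPhase ρ ν) (ρ * rz ρ * Real.cos u) u :=
  ((Real.hasDerivAt_sin u).sub_const _).const_mul _

lemma neg_deriv_eigenphase (hgap : SpectralGap ρ ν) (σ : ℤˣ) (u : ℝ) :
    -deriv (eigenphase ρ ν σ) u = σ * groupVelocity ρ ν u := by
  have hu := abs_lt.1 (hgap u)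
  have h := (((Real.hasDerivAt_arccos hu.1.ne' hu.2.ne).comp u
    (hasDerivAt_cosPhase ρ ν u)).const_mul (σ : ℝ)).const_add (π / 2)
  rw [show eigenphase ρ ν σ = fun u => π / 2 + σ * (Real.arccos ∘ cosPhase ρ ν) u from rfl, h.deriv,
    groupVelocity, sinPhase]
  ring

lemma groupVelocity_mul_sinPhase (hgap : SpectralGap ρ ν) (u : ℝ) :
    groupVelocity ρ ν u * sinPhase ρ ν u = ρ * rz ρ * Real.cos u :=
  div_mul_cancel₀ _ (sinPhase_pos hgap u).ne'

lemma hasDerivAt_groupVelocity (hgap : SpectralGap ρ ν) (u : ℝ) :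
    HasDerivAt (groupVelocity ρ ν) (velocitySlope ρ ν u / sinPhase ρ ν u) u := by
  have hS := (sinPhase_pos hgap u).ne'
  have hsin : HasDerivAt (sinPhase ρ ν)
      (-(cosPhase ρ ν u * (ρ * rz ρ * Real.cos u)) / sinPhase ρ ν u) u := by
    refine ((((hasDerivAt_cosPhase ρ ν u).fun_pow 2).const_sub 1).sqrt
      (sub_pos.2 (cosPhase_sq_lt_one hgap u)).ne').congr_deriv ?_
    rw [← sinPhase]
    field_simp
    norm_num
    ring
  refine (((Real.hasDerivAt_cos u).const_mul (ρ * rz ρ)).div hsin hS).congr_deriv ?_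
  rw [← groupVelocity_mul_sinPhase hgap, velocitySlope]
  field_simp
  ring

lemma continuous_groupVelocity (hgap : SpectralGap ρ ν) : Continuous (groupVelocity ρ ν) :=
  continuous_iff_continuousAt.2 fun u => (hasDerivAt_groupVelocity hgap u).continuousAt

lemma groupVelocity_sq_mul (hgap : SpectralGap ρ ν) (u : ℝ) :
    groupVelocity ρ ν u ^ 2 * (1 - cosPhase ρ ν u ^ 2) = (ρ * rz ρ) ^ 2 * (1 - Real.sin u ^ 2) := by
  rw [← sinPhase_sq hgap, ← mul_pow, groupVelocity_mul_sinPhase hgap, mul_pow, Real.cos_sq']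

lemma groupVelocity_sq_le (hρ : ρ ∈ Set.Ioo (0 : ℝ) 1) (hgap : SpectralGap ρ ν) (u : ℝ) :
    groupVelocity ρ ν u ^ 2 ≤ ρ * rz ρ := by
  have hm₀ : 0 < ρ * rz ρ := mul_pos hρ.1 (rz_pos hρ)
  have hm := mul_rz_le_half hρ
  have hcos : ρ * rz ρ * (1 - Real.sin u ^ 2) ≤ 1 - cosPhase ρ ν u ^ 2 := by
    have habs : |cosPhase ρ ν u| ≤ 1 / 2 * (1 + |Real.sin u|) := by
      rw [cosPhase, abs_mul, abs_of_pos hm₀]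
      exact mul_le_mul hm ((abs_sub _ _).trans (by linarith [Real.abs_sin_le_one ν]))
        (abs_nonneg _) (by norm_num)
    have hsq := pow_le_pow_left₀ (abs_nonneg _) habs 2
    rw [sq_abs] at hsq
    have hscale := mul_le_mul_of_nonneg_right hm (sub_nonneg.2 (Real.sin_sq_le_one u))
    rw [← sq_abs (Real.sin u)] at hscale ⊢
    nlinarith [sq_nonneg (1 - |Real.sin u|)]
  refine le_of_mul_le_mul_right ?_ (sub_pos.2 (cosPhase_sq_lt_one hgap u))
  rw [groupVelocity_sq_mul hgap, sq, mul_assoc]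
  exact mul_le_mul_of_nonneg_left hcos hm₀.le

lemma xif_eq (hρ : ρ ∈ Set.Ioo (0 : ℝ) 1) (ν x : ℝ) : xif ρ ν x
    = (x ^ 2) ^ 2 - (1 + (ρ * rz ρ) ^ 2 * Real.cos ν ^ 2) * x ^ 2 + (ρ * rz ρ) ^ 2 := by
  rw [xif]
  linear_combination -x ^ 2 * rz_sq hρ

lemma xif_groupVelocity (hρ : ρ ∈ Set.Ioo (0 : ℝ) 1) (hgap : SpectralGap ρ ν) (u : ℝ) :
    xif ρ ν (groupVelocity ρ ν u) = velocitySlope ρ ν u ^ 2 := by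
  have h := groupVelocity_sq_mul hgap u
  rw [xif_eq hρ, velocitySlope, Real.cos_sq' ν]
  unfold cosPhase at *
  linear_combination (groupVelocity ρ ν u ^ 2 - 1) * h

lemma sq_one_sub_groupVelocity_sq_mul_sinPhase (hgap : SpectralGap ρ ν) (u : ℝ) :
    ((1 - groupVelocity ρ ν u ^ 2) * sinPhase ρ ν u) ^ 2
      = 1 - ρ ^ 2 * rz ρ ^ 2 * (1 + Real.sin ν ^ 2)
        - (1 - ρ ^ 2 * rz ρ ^ 2 * Real.cos ν ^ 2) * groupVelocity ρ ν u ^ 2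
        - 2 * ρ * rz ρ * Real.sin ν * velocitySlope ρ ν u := by
  have h := groupVelocity_sq_mul hgap u
  rw [mul_pow, sinPhase_sq hgap, velocitySlope, Real.cos_sq' ν]
  unfold cosPhase at *
  linear_combination (groupVelocity ρ ν u ^ 2 - 1) * h

lemma one_sub_groupVelocity_sq_pos (hρ : ρ ∈ Set.Ioo (0 : ℝ) 1) (hgap : SpectralGap ρ ν)
    (u : ℝ) : 0 < 1 - groupVelocity ρ ν u ^ 2 := by
  linarith [groupVelocity_sq_le hρ hgap u, mul_rz_le_half hρ]

lemma sqrt_etaP_groupVelocity (hρ : ρ ∈ Set.Ioo (0 : ℝ) 1) (hgap : SpectralGap ρ ν) {u : ℝ}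
    (hu : velocitySlope ρ ν u ≤ 0) : Real.sqrt (etaP ρ ν (groupVelocity ρ ν u))
      = (1 - groupVelocity ρ ν u ^ 2) * sinPhase ρ ν u := by
  have hnonneg := mul_pos (one_sub_groupVelocity_sq_pos hρ hgap u) (sinPhase_pos hgap u)
  rw [← Real.sqrt_sq hnonneg.le, sq_one_sub_groupVelocity_sq_mul_sinPhase hgap, etaP,
    xif_groupVelocity hρ hgap, Real.sqrt_sq_eq_abs, abs_of_nonpos hu]
  ring_nf

lemma sqrt_etaM_groupVelocity (hρ : ρ ∈ Set.Ioo (0 : ℝ) 1) (hgap : SpectralGap ρ ν) {u : ℝ}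
    (hu : 0 ≤ velocitySlope ρ ν u) : Real.sqrt (etaM ρ ν (groupVelocity ρ ν u))
      = (1 - groupVelocity ρ ν u ^ 2) * sinPhase ρ ν u := by
  have hnonneg := mul_pos (one_sub_groupVelocity_sq_pos hρ hgap u) (sinPhase_pos hgap u)
  rw [← Real.sqrt_sq hnonneg.le, sq_one_sub_groupVelocity_sq_mul_sinPhase hgap, etaM,
    xif_groupVelocity hρ hgap, Real.sqrt_sq hu]

lemma eq_of_sq_sub_mul_add_sq_eq_zero {m b y z : ℝ} (hm : 0 < m) (hy₀ : 0 ≤ y) (hz₀ : 0 ≤ z)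
    (hym : y ≤ m) (hzm : z ≤ m) (hy : y ^ 2 - b * y + m ^ 2 = 0) (hz : z ^ 2 - b * z + m ^ 2 = 0) :
    y = z := by
  by_contra hne
  have hsum : y + z - b = 0 :=
    (mul_eq_zero.1 (by linear_combination hy - hz : (y - z) * (y + z - b) = 0)).resolve_left
      (sub_ne_zero.2 hne)
  have hprod : y * z = m ^ 2 := by linear_combination y * hsum - hy
  have hmy : m ≤ y := by nlinarith
  have hmz : m ≤ z := by nlinarith
  exact hne (by linarith)

/- The radicands in `hstar` are chosen so that `hstar ^ 2 = (a - b) ^ 2 / 4` is the smaller root of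
`xif`, regarded as a quadratic polynomial in `x ^ 2`; the larger one is `(a + b) ^ 2 / 4`. -/
lemma exists_hstar_eq (hρ : ρ ∈ Set.Ioo (0 : ℝ) 1) (ν : ℝ) :
    ∃ a b : ℝ, 0 ≤ b ∧ b ≤ a ∧ hstar ρ ν = 1 / 2 * (a - b) ∧ ρ * rz ρ = (a ^ 2 - b ^ 2) / 4 ∧
      1 + (ρ * rz ρ) ^ 2 * Real.cos ν ^ 2 = (a ^ 2 + b ^ 2) / 2 := by
  have hm₀ : 0 < ρ * rz ρ := mul_pos hρ.1 (rz_pos hρ)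
  have hminus : 0 ≤ (1 - ρ * rz ρ) ^ 2 - ρ ^ 2 * rz ρ ^ 2 * Real.sin ν ^ 2 := by
    nlinarith [mul_le_mul_of_nonneg_left (Real.sin_sq_le_one ν) (sq_nonneg (ρ * rz ρ)),
      mul_rz_le_half hρ]
  have hle : (1 - ρ * rz ρ) ^ 2 - ρ ^ 2 * rz ρ ^ 2 * Real.sin ν ^ 2
      ≤ (1 + ρ * rz ρ) ^ 2 - ρ ^ 2 * rz ρ ^ 2 * Real.sin ν ^ 2 := by linarith
  refine ⟨_, _, Real.sqrt_nonneg _, Real.sqrt_le_sqrt hle, rfl, ?_, ?_⟩ <;>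
    rw [Real.sq_sqrt (hminus.trans hle), Real.sq_sqrt hminus]
  · ring
  · rw [Real.cos_sq']
    ring

lemma hstar_nonneg (hρ : ρ ∈ Set.Ioo (0 : ℝ) 1) (ν : ℝ) : 0 ≤ hstar ρ ν := by
  obtain ⟨a, b, -, hab, hstar_eq, -, -⟩ := exists_hstar_eq hρ ν
  linarith

lemma hstar_sq_le (hρ : ρ ∈ Set.Ioo (0 : ℝ) 1) (ν : ℝ) : hstar ρ ν ^ 2 ≤ ρ * rz ρ := by
  obtain ⟨a, b, hb, hab, hstar_eq, hdiff, -⟩ := exists_hstar_eq hρ ν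
  rw [hstar_eq, hdiff]
  nlinarith

lemma xif_hstar (hρ : ρ ∈ Set.Ioo (0 : ℝ) 1) (ν : ℝ) : xif ρ ν (hstar ρ ν) = 0 := by
  obtain ⟨a, b, -, -, hstar_eq, hdiff, hsum⟩ := exists_hstar_eq hρ ν
  rw [xif_eq hρ, hsum, hdiff, hstar_eq]
  ring

lemma groupVelocity_eq_hstar (hρ : ρ ∈ Set.Ioo (0 : ℝ) 1) (hgap : SpectralGap ρ ν) {u : ℝ}
    (hcos : 0 ≤ Real.cos u) (hu : velocitySlope ρ ν u = 0) :
    groupVelocity ρ ν u = hstar ρ ν := by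
  have hm₀ : 0 < ρ * rz ρ := mul_pos hρ.1 (rz_pos hρ)
  have hv : 0 ≤ groupVelocity ρ ν u := div_nonneg (by positivity) (sinPhase_pos hgap u).le
  have hxi : xif ρ ν (groupVelocity ρ ν u) = 0 := by
    rw [xif_groupVelocity hρ hgap, hu, zero_pow two_ne_zero]
  have hstar_xi := xif_hstar hρ ν
  rw [xif_eq hρ] at hxi hstar_xi
  exact (pow_left_inj₀ hv (hstar_nonneg hρ ν) two_ne_zero).1 <|
    eq_of_sq_sub_mul_add_sq_eq_zero hm₀ (sq_nonneg _) (sq_nonneg _)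
      (groupVelocity_sq_le hρ hgap u) (hstar_sq_le hρ ν) hxi hstar_xi

/- At a critical point the velocity is `hstar`, so `velocitySlope` becomes an affine function of
`sin u` with nonzero slope. -/
lemma eq_of_velocitySlope_eq_zero (hρ : ρ ∈ Set.Ioo (0 : ℝ) 1) (hgap : SpectralGap ρ ν) {u₁ u₂ : ℝ}
    (hu₁ : u₁ ∈ Set.Icc (-(π / 2)) (π / 2)) (hu₂ : u₂ ∈ Set.Icc (-(π / 2)) (π / 2))
    (h₁ : velocitySlope ρ ν u₁ = 0) (h₂ : velocitySlope ρ ν u₂ = 0) : u₁ = u₂ := by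
  have hne : ρ * rz ρ * (1 - hstar ρ ν ^ 2) ≠ 0 := by
    have hm₀ : 0 < ρ * rz ρ := mul_pos hρ.1 (rz_pos hρ)
    have hstar_lt : 0 < 1 - hstar ρ ν ^ 2 := by
      linarith [hstar_sq_le hρ ν, mul_rz_le_half hρ]
    positivity
  have hv₁ := groupVelocity_eq_hstar hρ hgap (Real.cos_nonneg_of_mem_Icc hu₁) h₁
  have hv₂ := groupVelocity_eq_hstar hρ hgap (Real.cos_nonneg_of_mem_Icc hu₂) h₂
  rw [velocitySlope, hv₁, cosPhase] at h₁
  rw [velocitySlope, hv₂, cosPhase] at h₂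
  exact Real.injOn_sin hu₁ hu₂ (mul_left_cancel₀ hne (by linear_combination h₂ - h₁))

lemma exists_velocitySlope_sign_change (hρ : ρ ∈ Set.Ioo (0 : ℝ) 1) (hgap : SpectralGap ρ ν) :
    ∃ c ∈ Set.Icc (-(π / 2)) (π / 2), velocitySlope ρ ν c = 0 ∧
      (∀ u ∈ Set.Ioo (-(π / 2)) c, 0 < velocitySlope ρ ν u) ∧
      ∀ u ∈ Set.Ioo c (π / 2), velocitySlope ρ ν u < 0 := by
  have hm₀ : 0 < ρ * rz ρ := mul_pos hρ.1 (rz_pos hρ)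
  have hle : -(π / 2) ≤ π / 2 := by linarith [Real.pi_pos]
  have hcont : Continuous (velocitySlope ρ ν) :=
    ((contDiff_cosPhase ρ ν).continuous.mul ((continuous_groupVelocity hgap).pow 2)).sub
      (continuous_const.mul Real.continuous_sin)
  have hleft : 0 ≤ velocitySlope ρ ν (-(π / 2)) := by
    simpa [velocitySlope, groupVelocity] using hm₀.le
  have hright : velocitySlope ρ ν (π / 2) ≤ 0 := by
    simpa [velocitySlope, groupVelocity] using hm₀.le
  obtain ⟨c, hc, hzero⟩ := intermediate_value_Icc' hle hcont.continuousOn ⟨hright, hleft⟩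
  refine ⟨c, hc, hzero, fun u hu => ?_, fun u hu => ?_⟩
  · by_contra! hneg
    obtain ⟨w, hw, hw₀⟩ := intermediate_value_Icc' hu.1.le hcont.continuousOn ⟨hneg, hleft⟩
    have hwc := eq_of_velocitySlope_eq_zero hρ hgap
      ⟨hw.1, hw.2.trans (hu.2.le.trans hc.2)⟩ hc hw₀ hzero
    exact (hw.2.trans_lt hu.2).ne hwc
  · by_contra! hpos
    obtain ⟨w, hw, hw₀⟩ := intermediate_value_Icc' hu.2.le hcont.continuousOn ⟨hright, hpos⟩
    have hwc := eq_of_velocitySlope_eq_zero hρ hgap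
      ⟨hc.1.trans (hu.1.le.trans hw.1), hw.2⟩ hc hw₀ hzero
    exact (hu.1.trans_le hw.1).ne' hwc

/-- The pushforward of Lebesgue measure on `[-π/2, π/2]` under `± groupVelocity` has this density
on `[-hstar, hstar]`; the two summands come from the two preimages of a velocity. -/
def velocityDensity (ρ ν x : ℝ) : ℝ :=
  Real.sqrt (etaP ρ ν x) / ((1 - x ^ 2) * Real.sqrt (xif ρ ν x))
    + Real.sqrt (etaM ρ ν x) / ((1 - x ^ 2) * Real.sqrt (xif ρ ν x))

lemma even_velocityDensity (ρ ν : ℝ) : Function.Even (velocityDensity ρ ν) := fun x => by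
  simp only [velocityDensity, etaP, etaM, xif, neg_sq]

lemma integral_mul_velocityDensity (hρ : ρ ∈ Set.Ioo (0 : ℝ) 1) (hgap : SpectralGap ρ ν)
    {f : ℝ → ℝ} (hf : Continuous f) :
    IntervalIntegrable (fun x => f x * velocityDensity ρ ν x) volume 0 (hstar ρ ν) ∧
      ∫ x in 0..hstar ρ ν, f x * velocityDensity ρ ν x
        = ∫ u in -(π / 2)..π / 2, f (groupVelocity ρ ν u) := by
  obtain ⟨c, hc, hzero, hpos, hneg⟩ := exists_velocitySlope_sign_change hρ hgap
  have hleft : groupVelocity ρ ν (-(π / 2)) = 0 := by simp [groupVelocity]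
  have hright : groupVelocity ρ ν (π / 2) = 0 := by simp [groupVelocity]
  rw [← hleft, ← groupVelocity_eq_hstar hρ hgap (Real.cos_nonneg_of_mem_Icc hc) hzero]
  refine intervalIntegrable_mul_add_of_unimodal hc.1 hc.2 hf (hasDerivAt_groupVelocity hgap)
    (hleft.trans hright.symm) (fun u hu => div_pos (hpos u hu) (sinPhase_pos hgap u))
    (fun u hu => div_neg_of_neg_of_pos (hneg u hu) (sinPhase_pos hgap u))
    (fun u hu => ?_) fun u hu => ?_
  all_goals
    have hS := (sinPhase_pos hgap u).ne'
    have hv := (one_sub_groupVelocity_sq_pos hρ hgap u).ne'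
  · have hD := (hneg u hu).ne
    rw [sqrt_etaP_groupVelocity hρ hgap (hneg u hu).le, xif_groupVelocity hρ hgap,
      Real.sqrt_sq_eq_abs, abs_of_neg (hneg u hu)]
    field_simp
  · have hD := (hpos u hu).ne'
    rw [sqrt_etaM_groupVelocity hρ hgap (hpos u hu).le, xif_groupVelocity hρ hgap,
      Real.sqrt_sq (hpos u hu).le]
    field_simp

lemma integral_hstar_mul_velocityDensity (hρ : ρ ∈ Set.Ioo (0 : ℝ) 1) (hgap : SpectralGap ρ ν)
    {f : ℝ → ℝ} (hf : Continuous f) :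
    ∫ x in -hstar ρ ν..hstar ρ ν, f x * velocityDensity ρ ν x
      = ∫ u in -(π / 2)..π / 2, (f (groupVelocity ρ ν u) + f (-groupVelocity ρ ν u)) := by
  have hv := continuous_groupVelocity hgap
  obtain ⟨hint, heq⟩ := integral_mul_velocityDensity hρ hgap hf
  obtain ⟨hint', heq'⟩ := integral_mul_velocityDensity hρ hgap (hf.comp continuous_neg)
  rw [integral_neg_self_mul_of_even (even_velocityDensity ρ ν) hint hint', heq]
  exact (congrArg _ heq').trans (intervalIntegral.integral_add
    ((hf.comp hv).intervalIntegrable _ _) ((hf.comp hv.neg).intervalIntegrable _ _)).symm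

end GroupVelocity

section LimitLaw

variable {ρ ν : ℝ} {α β : ℂ}

/-- The limit of the integrand of the `r`-th rescaled moment in momentum space: the `r`-th moment
of the law giving velocity `± groupVelocity` the weight of the respective eigenpart. -/
def momentDensity (ρ ν : ℝ) (α β : ℂ) (r : ℕ) (u : ℝ) : ℝ :=
  ∑ σ : ℤˣ, (σ * groupVelocity ρ ν u) ^ r * ‖eigenpart (reflection ρ ν u) σ !₂[α, β]‖ ^ 2

lemma tendsto_moment_spinor (hρ : ρ ∈ Set.Ioo (0 : ℝ) 1) (hgap : SpectralGap ρ ν) (α β : ℂ)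
    (r : ℕ) : Tendsto (fun t : ℕ => ∑' x : ℤ, ((x : ℝ) / t) ^ r * ‖spinor ρ ν α β t x‖ ^ 2) atTop
      (𝓝 ((2 * π)⁻¹ * ∫ u in -(π / 2)..-(π / 2) + 2 * π, momentDensity ρ ν α β r u)) := by
  have hshift : ContDiff ℝ ∞ fun k : ℝ => k - ν := contDiff_id.sub contDiff_const
  have h := tendsto_moment_of_hasSum_wavePacket
    (fun σ => (contDiff_eigenphase hgap σ).comp hshift)
    (fun σ => (contDiff_eigenpart_reflection hgap σ !₂[α, β]).comp hshift)
    (fun k => inner_eigenpart_eq_zero (involutive_reflection hρ hgap (k - ν))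
      (isSymmetric_reflection ρ ν (k - ν)) !₂[α, β])
    (finite_support_spinor ρ ν α β) (hasSum_spinor_wavePacket hρ hgap α β) r (ν - π / 2)
  have hdensity (k : ℝ) : ∑ σ : ℤˣ, (-deriv (fun k => eigenphase ρ ν σ (k - ν)) k) ^ r
      * ‖eigenpart (reflection ρ ν (k - ν)) σ !₂[α, β]‖ ^ 2
      = momentDensity ρ ν α β r (k - ν) := by
    simp only [deriv_comp_sub_const, neg_deriv_eigenphase hgap, momentDensity]
  simp only [Function.comp_def, hdensity] at h
  rw [intervalIntegral.integral_comp_sub_right (momentDensity ρ ν α β r)] at h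
  convert h using 4 <;> ring

lemma re_inner_reflection (ρ ν : ℝ) (α β : ℂ) (u : ℝ) :
    (⟪!₂[α, β], reflection ρ ν u !₂[α, β]⟫_ℂ).re
      = (sinDiag ρ ν u * (‖α‖ ^ 2 - ‖β‖ ^ 2) + 2 * (conj α * β * sinOffDiag ρ ν u).re)
        / sinPhase ρ ν u := by
  rw [reflection, map_smul, LinearMap.smul_apply, inner_smul_right, ← Complex.ofReal_inv,
    Complex.re_ofReal_mul, div_eq_inv_mul]
  congr 1
  rw [← Complex.normSq_eq_norm_sq, ← Complex.normSq_eq_norm_sq, Complex.normSq_apply,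
    Complex.normSq_apply]
  simp [EuclideanSpace.inner_eq_star_dotProduct, sinMatrix]
  ring

lemma sinOffDiag_sub (ρ ν u : ℝ) : sinOffDiag ρ ν u - sinOffDiag ρ ν (π - u)
    = ((-2 * rz ρ ^ 2 * Real.cos u : ℝ) : ℂ) * Complex.exp (-(Complex.I * ν)) := by
  have hexp (w : ℝ) : Complex.exp (-(Complex.I * (w + ν)))
      = (Complex.cos w - Complex.sin w * Complex.I) * Complex.exp (-(Complex.I * ν)) := by
    have h : -(Complex.I * (w + ν)) = ((-w : ℝ) : ℂ) * Complex.I + -(Complex.I * ν) := by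
      push_cast
      ring
    rw [h, Complex.exp_add, Complex.exp_mul_I, Complex.ofReal_neg, Complex.cos_neg,
      Complex.sin_neg, neg_mul, sub_eq_add_neg]
  rw [sinOffDiag, sinOffDiag, hexp, hexp, Complex.ofReal_sub, Complex.cos_pi_sub,
    Complex.sin_pi_sub]
  push_cast
  ring

lemma re_inner_reflection_sub (hρ : ρ ∈ Set.Ioo (0 : ℝ) 1) (ν : ℝ) (α β : ℂ) (u : ℝ) :
    (⟪!₂[α, β], reflection ρ ν u !₂[α, β]⟫_ℂ).re
        - (⟪!₂[α, β], reflection ρ ν (π - u) !₂[α, β]⟫_ℂ).re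
      = 2 * (gam ρ ν α β (groupVelocity ρ ν u) - 1) := by
  have hS : sinPhase ρ ν (π - u) = sinPhase ρ ν u := by
    simp only [sinPhase, cosPhase, Real.sin_pi_sub]
  have hdiag : sinDiag ρ ν u - sinDiag ρ ν (π - u) = 2 * (ρ * rz ρ) * Real.cos u := by
    rw [sinDiag, sinDiag, Real.cos_pi_sub]
    ring
  have hphase : (conj α * β * Complex.exp (-(Complex.I * ν))).re
      = (α * conj β).re * Real.cos ν - (α * conj β).im * Real.sin ν := by
    have h : -(Complex.I * ν) = ((-ν : ℝ) : ℂ) * Complex.I := by push_cast; ring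
    rw [h, Complex.exp_ofReal_mul_I, Real.cos_neg, Real.sin_neg]
    simp only [Complex.mul_re, Complex.mul_im, Complex.add_re, Complex.add_im, Complex.conj_re,
      Complex.conj_im, Complex.ofReal_re, Complex.ofReal_im, Complex.I_re, Complex.I_im]
    ring
  have hoff : (conj α * β * sinOffDiag ρ ν u).re - (conj α * β * sinOffDiag ρ ν (π - u)).re
      = -2 * rz ρ ^ 2 * Real.cos u
        * ((α * conj β).re * Real.cos ν - (α * conj β).im * Real.sin ν) := by
    rw [← Complex.sub_re, ← mul_sub, sinOffDiag_sub, mul_left_comm, Complex.re_ofReal_mul, hphase]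
  rw [re_inner_reflection, re_inner_reflection, hS, gam, groupVelocity]
  linear_combination ((‖α‖ ^ 2 - ‖β‖ ^ 2) * hdiag + 2 * hoff) / sinPhase ρ ν u
    + 4 * rz ρ ^ 2 * Real.cos u / sinPhase ρ ν u
      * ((α * conj β).re * Real.cos ν - (α * conj β).im * Real.sin ν) * mul_inv_cancel₀ hρ.1.ne'

lemma momentDensity_add_pi_sub (hρ : ρ ∈ Set.Ioo (0 : ℝ) 1) (hgap : SpectralGap ρ ν)
    (hαβ : ‖α‖ ^ 2 + ‖β‖ ^ 2 = 1) (r : ℕ) (u : ℝ) :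
    momentDensity ρ ν α β r u + momentDensity ρ ν α β r (π - u)
      = groupVelocity ρ ν u ^ r * gam ρ ν α β (groupVelocity ρ ν u)
        + (-groupVelocity ρ ν u) ^ r * gam ρ ν α β (-groupVelocity ρ ν u) := by
  have hnorm : ‖(!₂[α, β] : EuclideanSpace ℂ (Fin 2))‖ ^ 2 = 1 := by
    rw [EuclideanSpace.norm_sq_eq, Fin.sum_univ_two]
    exact hαβ
  have hv : groupVelocity ρ ν (π - u) = -groupVelocity ρ ν u := by
    simp only [groupVelocity, sinPhase, cosPhase, Real.sin_pi_sub, Real.cos_pi_sub]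
    ring
  have hdiff := re_inner_reflection_sub hρ ν α β u
  have hgam : gam ρ ν α β (-groupVelocity ρ ν u) = 2 - gam ρ ν α β (groupVelocity ρ ν u) := by
    rw [gam, gam]
    ring
  simp only [momentDensity, UnitsInt.univ, Finset.sum_pair (by decide : (1 : ℤˣ) ≠ -1),
    norm_eigenpart_sq (involutive_reflection hρ hgap _) (isSymmetric_reflection ρ ν _), hnorm, hv,
    hgam]
  push_cast
  simp only [neg_mul, one_mul, neg_neg]
  linear_combination (groupVelocity ρ ν u ^ r - (-groupVelocity ρ ν u) ^ r) / 2 * hdiff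

lemma continuous_momentDensity (hgap : SpectralGap ρ ν) (α β : ℂ) (r : ℕ) :
    Continuous (momentDensity ρ ν α β r) :=
  continuous_finsetSum _ fun σ _ =>
    ((continuous_const.mul (continuous_groupVelocity hgap)).pow r).mul
      ((contDiff_eigenpart_reflection hgap σ _).continuous.norm.pow 2)

lemma integral_eq_integral_add_pi_sub {f : ℝ → ℝ} (hf : Continuous f) :
    ∫ u in -(π / 2)..-(π / 2) + 2 * π, f u = ∫ u in -(π / 2)..π / 2, (f u + f (π - u)) := by
  have hf' : Continuous fun u => f (π - u) := hf.comp (continuous_sub_left π)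
  rw [intervalIntegral.integral_add (hf.intervalIntegrable _ _) (hf'.intervalIntegrable _ _),
    intervalIntegral.integral_comp_sub_left f π,
    ← intervalIntegral.integral_add_adjacent_intervals (hf.intervalIntegrable _ (π / 2))
      (hf.intervalIntegrable _ _)]
  ring_nf

lemma integral_momentDensity (hρ : ρ ∈ Set.Ioo (0 : ℝ) 1) (hgap : SpectralGap ρ ν)
    (hαβ : ‖α‖ ^ 2 + ‖β‖ ^ 2 = 1) (r : ℕ) :
    ∫ u in -(π / 2)..-(π / 2) + 2 * π, momentDensity ρ ν α β r u
      = ∫ x in -hstar ρ ν..hstar ρ ν, x ^ r * gam ρ ν α β x * velocityDensity ρ ν x := by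
  have hcont : Continuous fun x : ℝ => x ^ r * gam ρ ν α β x :=
    (continuous_pow r).mul (continuous_const.add (continuous_const.mul continuous_id))
  rw [integral_eq_integral_add_pi_sub (continuous_momentDensity hgap α β r),
    integral_hstar_mul_velocityDensity hρ hgap hcont]
  simp only [momentDensity_add_pi_sub hρ hgap hαβ]

end LimitLaw

end QuantumWalk

/-- convergence of the rescaled moments of the quantum walk. -/
theorem stmt15 (ρ ν : ℝ) (hρ : ρ ∈ Set.Ioo (0 : ℝ) 1)
    (hexc : ∀ n : ℤ, ¬(ρ = 1 / Real.sqrt 2 ∧ ν = π / 2 + n * π))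
    (α β : ℂ) (hαβ : ‖α‖ ^ 2 + ‖β‖ ^ 2 = 1) (r : ℕ) :
    Tendsto (fun t : ℕ => ∑' x : ℤ, ((x : ℝ) / (t : ℝ)) ^ r * qprob ρ ν α β t x)
      atTop
      (𝓝 (∫ x in (-(hstar ρ ν))..(hstar ρ ν),
        x ^ r * (Real.sqrt (etaP ρ ν x) + Real.sqrt (etaM ρ ν x)) * gam ρ ν α β x
          / (2 * π * (1 - x ^ 2) * Real.sqrt (xif ρ ν x)))) := by
  have hgap := QuantumWalk.spectralGap_of_ne hρ hexc
  have hlim := QuantumWalk.tendsto_moment_spinor hρ hgap α β r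
  have hintegrand (x : ℝ) :
      (2 * π)⁻¹ * (x ^ r * gam ρ ν α β x * QuantumWalk.velocityDensity ρ ν x)
        = x ^ r * (Real.sqrt (etaP ρ ν x) + Real.sqrt (etaM ρ ν x)) * gam ρ ν α β x
          / (2 * π * (1 - x ^ 2) * Real.sqrt (xif ρ ν x)) := by
    simp only [QuantumWalk.velocityDensity, div_eq_mul_inv, mul_inv]
    ring
  rw [QuantumWalk.integral_momentDensity hρ hgap hαβ,
    ← intervalIntegral.integral_const_mul] at hlim
  simpa only [QuantumWalk.norm_spinor_sq, hintegrand] using hlim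

end
end

section
/- Let ρ = 1/√2 and ν = π/2 + nπ for an integer n, and let k ∈ ℝ. Define R(φ) = [[e^{iφ}, 0], [0, e^{−iφ}]] and V = (1/√2)[[e^{−(−1)ⁿ iπ/4}, −e^{−(−1)ⁿ iπ/4}], [−e^{(−1)ⁿ iπ/4}, −e^{(−1)ⁿ iπ/4}]]. Then (R(−k/2)·V)² = (1/2)[[1 − (−1)ⁿ i e^{−ik}, 1 + (−1)ⁿ i e^{−ik}], [−1 + (−1)ⁿ i e^{ik}, 1 + (−1)ⁿ i e^{ik}]], and H̃(k) = −i·(−1)ⁿ·(R(−k/2)·V)². -/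
open Real

noncomputable section

/-- The matrix `H̃(k)`. -/
def Htilde (ρ ν k : ℝ) : Matrix (Fin 2) (Fin 2) ℂ :=
  !![-((ρ * rz ρ : ℝ) : ℂ) * (Complex.exp (Complex.I * (ν : ℂ)) + Complex.exp (-(Complex.I * (k : ℂ)))),
      -((ρ ^ 2 : ℝ) : ℂ) * Complex.exp (Complex.I * (ν : ℂ)) + (((rz ρ) ^ 2 : ℝ) : ℂ) * Complex.exp (-(Complex.I * (k : ℂ)));
      -((ρ ^ 2 : ℝ) : ℂ) * Complex.exp (-(Complex.I * (ν : ℂ))) + (((rz ρ) ^ 2 : ℝ) : ℂ) * Complex.exp (Complex.I * (k : ℂ)),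
      ((ρ * rz ρ : ℝ) : ℂ) * (Complex.exp (-(Complex.I * (ν : ℂ))) + Complex.exp (Complex.I * (k : ℂ)))]

/-- `R(φ) = diag(e^{iφ}, e^{−iφ})`. -/
def Rmat (φ : ℝ) : Matrix (Fin 2) (Fin 2) ℂ :=
  !![Complex.exp (Complex.I * (φ : ℂ)), 0; 0, Complex.exp (-(Complex.I * (φ : ℂ)))]

/-- The coin matrix `V` depending on the parity of `n`. -/
def Vmat (n : ℤ) : Matrix (Fin 2) (Fin 2) ℂ :=
  ((1 / Real.sqrt 2 : ℝ) : ℂ) •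
    !![Complex.exp (-((-1 : ℂ) ^ n * Complex.I * ((π : ℝ) : ℂ) / 4)),
        -Complex.exp (-((-1 : ℂ) ^ n * Complex.I * ((π : ℝ) : ℂ) / 4));
        -Complex.exp ((-1 : ℂ) ^ n * Complex.I * ((π : ℝ) : ℂ) / 4),
        -Complex.exp ((-1 : ℂ) ^ n * Complex.I * ((π : ℝ) : ℂ) / 4)]

/-! Up to the factor `1/√2`, the matrix `R(φ)V` is `[[a, -a], [-a⁻¹, -a⁻¹]]` with
`a = e^{iφ - (-1)ⁿiπ/4}`, and the square of such a matrix only involves `a²` and `a⁻²`. For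
`φ = -k/2` and `ν = π/2 + nπ` one has `e^{iν} = (-1)ⁿ i`, hence `a² = -e^{iν} e^{-ik}`. On the
other side, `e^{2iν} = -1` means `e^{-iν} = -e^{iν}`, which is what allows `-e^{iν}` to be factored
out of both rows of `H̃(k)`. -/

theorem sq_fin_two_of_mul_eq_one {R : Type*} [Ring R] {a b : R} (hab : a * b = 1)
    (hba : b * a = 1) :
    !![a, -a; -b, -b] ^ 2 = !![1 + a ^ 2, 1 - a ^ 2; -1 + b ^ 2, 1 + b ^ 2] := by
  simp only [sq, Matrix.mul_fin_two, mul_neg, neg_mul, neg_neg, hab, hba]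
  congrm !![?_, ?_; ?_, ?_] <;> abel

theorem neg_one_zpow_sq {R : Type*} [DivisionRing R] (n : ℤ) : ((-1 : R) ^ n) ^ 2 = 1 := by
  rcases n.even_or_odd with hn | hn <;> simp [hn.neg_one_zpow]

theorem neg_one_zpow_mul_I_sq (n : ℤ) : ((-1 : ℂ) ^ n * Complex.I) ^ 2 = -1 := by
  rw [mul_pow, neg_one_zpow_sq, Complex.I_sq, one_mul]

theorem exp_I_mul_pi_div_two_add_int_mul_pi (n : ℤ) :
    Complex.exp (Complex.I * ((π / 2 + n * π : ℝ) : ℂ)) = (-1 : ℂ) ^ n * Complex.I := by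
  calc Complex.exp (Complex.I * ((π / 2 + n * π : ℝ) : ℂ))
      = Complex.exp (n * (π * Complex.I) + π / 2 * Complex.I) := by
        push_cast
        ring_nf
    _ = (-1 : ℂ) ^ n * Complex.I := by
        rw [Complex.exp_add, Complex.exp_int_mul, Complex.exp_pi_mul_I,
          Complex.exp_pi_div_two_mul_I]

theorem exp_neg_one_zpow_mul_I_mul_pi_div_two (n : ℤ) :
    Complex.exp ((-1 : ℂ) ^ n * Complex.I * π / 2) = (-1 : ℂ) ^ n * Complex.I := by
  rw [mul_assoc, mul_div_assoc, mul_comm Complex.I, mul_div_right_comm]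
  rcases n.even_or_odd with hn | hn
  · rw [hn.neg_one_zpow, one_mul, one_mul, Complex.exp_pi_div_two_mul_I]
  · rw [hn.neg_one_zpow, neg_one_mul, neg_one_mul, Complex.exp_neg,
      Complex.exp_pi_div_two_mul_I, Complex.inv_I]

theorem exp_neg_eq_neg_exp_of_sq_eq_neg_one {z : ℂ} (hz : Complex.exp z ^ 2 = -1) :
    Complex.exp (-z) = -Complex.exp z := by
  rw [Complex.exp_neg]
  exact inv_eq_of_mul_eq_one_right (by linear_combination -hz)

theorem one_div_sqrt_two_sq : (1 / √2) ^ 2 = 1 / 2 := by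
  rw [div_pow, one_pow, Real.sq_sqrt zero_le_two]

theorem rz_one_div_sqrt_two : rz (1 / √2) = 1 / √2 := by
  rw [rz, Real.sqrt_eq_iff_eq_sq (by rw [one_div_sqrt_two_sq]; norm_num) (by positivity),
    one_div_sqrt_two_sq]
  norm_num

/-- The phase `iφ - (-1)ⁿ iπ/4` of the `(0, 0)` entry of `R(φ)V`, which determines the whole matrix.
It includes the factor `i`, so that the entry is a multiple of `exp (walkPhase φ n)`. -/
def walkPhase (φ : ℝ) (n : ℤ) : ℂ :=
  Complex.I * φ - (-1 : ℂ) ^ n * Complex.I * π / 4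

theorem Rmat_mul_Vmat (φ : ℝ) (n : ℤ) :
    Rmat φ * Vmat n = ((1 / √2 : ℝ) : ℂ) •
      !![Complex.exp (walkPhase φ n), -Complex.exp (walkPhase φ n);
          -Complex.exp (-walkPhase φ n), -Complex.exp (-walkPhase φ n)] := by
  rw [Rmat, Vmat, Matrix.mul_smul, Matrix.mul_fin_two, walkPhase, neg_sub', sub_neg_eq_add,
    sub_eq_add_neg, Complex.exp_add, Complex.exp_add]
  simp only [zero_mul, add_zero, zero_add, mul_neg, neg_zero]

theorem exp_neg_walkPhase_sq (φ : ℝ) (n : ℤ) :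
    Complex.exp (-walkPhase φ n) ^ 2 =
      (-1 : ℂ) ^ n * Complex.I * Complex.exp (-(2 * (Complex.I * φ))) := by
  rw [← exp_neg_one_zpow_mul_I_mul_pi_div_two, ← Complex.exp_add, ← Complex.exp_nat_mul, walkPhase]
  push_cast
  ring_nf

theorem exp_walkPhase_sq (φ : ℝ) (n : ℤ) :
    Complex.exp (walkPhase φ n) ^ 2 =
      -((-1 : ℂ) ^ n * Complex.I * Complex.exp (2 * (Complex.I * φ))) := by
  have exp_pi_div_two := exp_neg_one_zpow_mul_I_mul_pi_div_two n
  have exp_pi_div_two_sq : Complex.exp ((-1 : ℂ) ^ n * Complex.I * π / 2) ^ 2 = -1 := by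
    rw [exp_pi_div_two, neg_one_zpow_mul_I_sq]
  have exp_neg_pi_div_two :
      Complex.exp (-((-1 : ℂ) ^ n * Complex.I * π / 2)) = -((-1 : ℂ) ^ n * Complex.I) := by
    rw [exp_neg_eq_neg_exp_of_sq_eq_neg_one exp_pi_div_two_sq, exp_pi_div_two]
  rw [← neg_mul, ← exp_neg_pi_div_two, ← Complex.exp_add, ← Complex.exp_nat_mul, walkPhase]
  push_cast
  ring_nf

theorem Rmat_mul_Vmat_sq (φ : ℝ) (n : ℤ) :
    (Rmat φ * Vmat n) ^ 2 = ((1 / 2 : ℝ) : ℂ) •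
      !![1 - (-1 : ℂ) ^ n * Complex.I * Complex.exp (2 * (Complex.I * φ)),
          1 + (-1 : ℂ) ^ n * Complex.I * Complex.exp (2 * (Complex.I * φ));
          -1 + (-1 : ℂ) ^ n * Complex.I * Complex.exp (-(2 * (Complex.I * φ))),
          1 + (-1 : ℂ) ^ n * Complex.I * Complex.exp (-(2 * (Complex.I * φ)))] := by
  have exp_mul_exp_neg : Complex.exp (walkPhase φ n) * Complex.exp (-walkPhase φ n) = 1 := by
    rw [← Complex.exp_add, add_neg_cancel, Complex.exp_zero]
  have exp_neg_mul_exp : Complex.exp (-walkPhase φ n) * Complex.exp (walkPhase φ n) = 1 := by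
    rw [mul_comm, exp_mul_exp_neg]
  rw [Rmat_mul_Vmat, smul_pow, ← Complex.ofReal_pow, one_div_sqrt_two_sq,
    sq_fin_two_of_mul_eq_one exp_mul_exp_neg exp_neg_mul_exp,
    exp_walkPhase_sq, exp_neg_walkPhase_sq, ← sub_eq_add_neg, sub_neg_eq_add]

theorem Htilde_one_div_sqrt_two_of_exp_sq_eq_neg_one {ν : ℝ}
    (hν : Complex.exp (Complex.I * ν) ^ 2 = -1) (k : ℝ) :
    Htilde (1 / √2) ν k = -Complex.exp (Complex.I * ν) • ((1 / 2 : ℝ) : ℂ) •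
      !![1 - Complex.exp (Complex.I * ν) * Complex.exp (-(Complex.I * k)),
          1 + Complex.exp (Complex.I * ν) * Complex.exp (-(Complex.I * k));
          -1 + Complex.exp (Complex.I * ν) * Complex.exp (Complex.I * k),
          1 + Complex.exp (Complex.I * ν) * Complex.exp (Complex.I * k)] := by
  rw [Htilde, rz_one_div_sqrt_two, ← sq, one_div_sqrt_two_sq,
    exp_neg_eq_neg_exp_of_sq_eq_neg_one hν]
  simp only [Matrix.smul_of, Matrix.smul_cons, Matrix.smul_empty, smul_eq_mul]
  congrm !![?_, ?_; ?_, ?_]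
  · linear_combination -(1 / 2 : ℝ) * Complex.exp (-(Complex.I * k)) * hν
  · linear_combination (1 / 2 : ℝ) * Complex.exp (-(Complex.I * k)) * hν
  · linear_combination (1 / 2 : ℝ) * Complex.exp (Complex.I * k) * hν
  · linear_combination (1 / 2 : ℝ) * Complex.exp (Complex.I * k) * hν

/-- at `ρ = 1/√2`, `ν = π/2 + nπ`, the square `(R(−k/2)V)²` has the given
explicit form and `H̃(k) = −i(−1)ⁿ (R(−k/2)V)²`. -/
theorem stmt17 (ρ ν : ℝ) (n : ℤ) (hρ : ρ = 1 / Real.sqrt 2) (hν : ν = π / 2 + n * π)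
    (k : ℝ) :
    (Rmat (-k / 2) * Vmat n) ^ 2
      = ((1 / 2 : ℝ) : ℂ) •
        !![1 - (-1 : ℂ) ^ n * Complex.I * Complex.exp (-(Complex.I * (k : ℂ))),
            1 + (-1 : ℂ) ^ n * Complex.I * Complex.exp (-(Complex.I * (k : ℂ)));
            -1 + (-1 : ℂ) ^ n * Complex.I * Complex.exp (Complex.I * (k : ℂ)),
            1 + (-1 : ℂ) ^ n * Complex.I * Complex.exp (Complex.I * (k : ℂ))] ∧
    Htilde ρ ν k = (-Complex.I * (-1 : ℂ) ^ n) • (Rmat (-k / 2) * Vmat n) ^ 2 := by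
  subst hρ hν
  have exp_ν := exp_I_mul_pi_div_two_add_int_mul_pi n
  have exp_ν_sq : Complex.exp (Complex.I * ((π / 2 + n * π : ℝ) : ℂ)) ^ 2 = -1 := by
    rw [exp_ν, neg_one_zpow_mul_I_sq]
  have two_mul_φ : 2 * (Complex.I * ((-k / 2 : ℝ) : ℂ)) = -(Complex.I * k) := by
    push_cast
    ring
  have hsq := Rmat_mul_Vmat_sq (-k / 2) n
  rw [two_mul_φ, neg_neg] at hsq
  refine ⟨hsq, ?_⟩
  rw [hsq, Htilde_one_div_sqrt_two_of_exp_sq_eq_neg_one exp_ν_sq, exp_ν, neg_mul,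
    mul_comm Complex.I ((-1 : ℂ) ^ n)]

end
end
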